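/- arXiv:2405.09367 — 10 statements merged into one kernel-verified Lean document; each statement's English description precedes it below -/
import Mathlib

section
/- Let k ≥ 0 and r ≥ 1 be integers, e_0 < e_1 < ⋯ < e_r and z real numbers, and let f be of class C^{k+2} on a neighborhood of z with f^{(j)}(z) = 0 for 1 ≤ j ≤ k and f^{(k+1)}(z) ≠ 0. Assume that either k is even or there exists 0 ≤ j ≤ r−1 with e_j + e_{j+1} ≠ 0. Then the smoothness indicator I(h) = Σ_{j=0}^{r−1} ((f(z + e_{j+1}·h) − f(z + e_j·h))/(e_{j+1} − e_j))² satisfies I(h) = Θ(h^{2(k+1)}) as h → 0⁺: there exist constants 0 < C₁ ≤ C₂ and h₀ > 0 such that C₁·h^{2(k+1)} ≤ I(h) ≤ C₂·h^{2(k+1)} for all 0 < h < h₀. -/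
open Filter Topology in
theorem aux_lim (k : ℕ) (z : ℝ) (f : ℝ → ℝ) (U : Set ℝ) (hU : U ∈ nhds z)
    (hf : ContDiffOn ℝ (k + 2 : ℕ) f U)
    (hcrit : ∀ j : ℕ, 1 ≤ j → j ≤ k → iteratedDeriv j f z = 0) (a : ℝ) :
    Tendsto (fun h : ℝ => (f (z + a * h) - f z) / h ^ (k + 1)) (𝓝[>] 0)
      (𝓝 (iteratedDeriv (k + 1) f z / (k + 1).factorial * a ^ (k + 1))) := by
  obtain ⟨ε, hε, hs⟩ := Metric.mem_nhds_iff.1 hU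
  have hz : z ∈ Metric.ball z ε := Metric.mem_ball_self hε
  have hf' : ContDiffOn ℝ (k + 1 : ℕ) f (Metric.ball z ε) :=
    (hf.mono hs).of_le (by exact_mod_cast Nat.le_succ (k + 1))
  have h1 := taylor_isLittleO (convex_ball z ε) hz hf'
  rw [nhdsWithin_eq_nhds.2 (Metric.ball_mem_nhds z hε)] at h1
  have hT : ∀ x, taylorWithinEval f (k + 1) (Metric.ball z ε) z x
      = f z + iteratedDeriv (k + 1) f z / (k + 1).factorial * (x - z) ^ (k + 1) := by
    intro x
    have hd : ∀ n, iteratedDerivWithin n f (Metric.ball z ε) z = iteratedDeriv n f z :=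
      fun n => iteratedDerivWithin_of_isOpen Metric.isOpen_ball hz
    rw [taylor_within_apply, Finset.sum_range_succ, Finset.sum_range_succ', Finset.sum_eq_zero]
    · simp only [hd]
      simp
      ring
    · intro i hi
      rw [hd, hcrit (i + 1) (by omega) (by have := Finset.mem_range.1 hi; omega)]
      simp
  simp only [hT] at h1
  have hφ : Tendsto (fun h : ℝ => z + a * h) (𝓝[>] 0) (𝓝 z) := by
    have : Tendsto (fun h : ℝ => z + a * h) (𝓝 0) (𝓝 (z + a * 0)) :=
      (by fun_prop : Continuous (fun h : ℝ => z + a * h)).tendsto 0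
    simpa using this.mono_left nhdsWithin_le_nhds
  have h2 := h1.comp_tendsto hφ
  have h3 : (fun h : ℝ => (z + a * h - z) ^ (k + 1)) =O[𝓝[>] 0] (fun h : ℝ => h ^ (k + 1)) := by
    have : (fun h : ℝ => (z + a * h - z) ^ (k + 1)) = fun h => a ^ (k + 1) * h ^ (k + 1) := by
      funext h; rw [← mul_pow]; congr 1; ring
    rw [this]
    exact (Asymptotics.isBigO_refl _ _).const_mul_left _
  have h4 := (h2.trans_isBigO h3).tendsto_div_nhds_zero
  have h5 := h4.add_const (iteratedDeriv (k + 1) f z / (k + 1).factorial * a ^ (k + 1))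
  rw [zero_add] at h5
  refine h5.congr' ?_
  filter_upwards [self_mem_nhdsWithin] with h hh
  have hh0 : h ^ (k + 1) ≠ 0 := pow_ne_zero _ (ne_of_gt hh)
  have e1 : z + a * h - z = a * h := by ring
  simp only [Function.comp, e1, mul_pow]
  field_simp
  ring

/-- **Smoothness indicator asymptotics at a critical point of exact order `k`.**
If `f` is `C^{k+2}` near `z`, has a critical point of exact order `k` at `z`, and either `k`
is even or some node pair is non-symmetric (`e j + e (j+1) ≠ 0`), then the simple smoothness
indicator `I(h) = Σ_j ((f(z+e_{j+1}h) - f(z+e_j h))/(e_{j+1}-e_j))²` is `Θ(h^{2(k+1)})`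
as `h → 0⁺`. -/
theorem stmt_3 (k r : ℕ) (hr : 1 ≤ r) (e : ℕ → ℝ)
    (he : ∀ i j : ℕ, i < j → j ≤ r → e i < e j)
    (z : ℝ) (f : ℝ → ℝ) (U : Set ℝ) (hU : U ∈ nhds z)
    (hf : ContDiffOn ℝ (k + 2 : ℕ) f U)
    (hcrit : ∀ j : ℕ, 1 ≤ j → j ≤ k → iteratedDeriv j f z = 0)
    (hk1 : iteratedDeriv (k + 1) f z ≠ 0)
    (hexc : Even k ∨ ∃ j : ℕ, j ≤ r - 1 ∧ e j + e (j + 1) ≠ 0) :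
    ∃ C₁ C₂ h₀ : ℝ, 0 < C₁ ∧ C₁ ≤ C₂ ∧ 0 < h₀ ∧
      ∀ h : ℝ, 0 < h → h < h₀ →
        C₁ * h ^ (2 * (k + 1)) ≤
            (∑ j ∈ Finset.range r,
              ((f (z + e (j + 1) * h) - f (z + e j * h)) / (e (j + 1) - e j)) ^ 2) ∧
          (∑ j ∈ Finset.range r,
              ((f (z + e (j + 1) * h) - f (z + e j * h)) / (e (j + 1) - e j)) ^ 2)
            ≤ C₂ * h ^ (2 * (k + 1)) := by
  classical
  set c := iteratedDeriv (k + 1) f z / (k + 1).factorial with hc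
  have hc0 : c ≠ 0 := div_ne_zero hk1 (by positivity)
  set L : ℝ := ∑ j ∈ Finset.range r,
    ((c * e (j + 1) ^ (k + 1) - c * e j ^ (k + 1)) / (e (j + 1) - e j)) ^ 2 with hL
  have hlim : Filter.Tendsto (fun h : ℝ => (∑ j ∈ Finset.range r,
      ((f (z + e (j + 1) * h) - f (z + e j * h)) / (e (j + 1) - e j)) ^ 2) / h ^ (2 * (k + 1)))
      (nhdsWithin 0 (Set.Ioi 0)) (nhds L) := by
    have : Filter.Tendsto (fun h : ℝ => ∑ j ∈ Finset.range r,
      (((f (z + e (j + 1) * h) - f z) / h ^ (k + 1) - (f (z + e j * h) - f z) / h ^ (k + 1))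
        / (e (j + 1) - e j)) ^ 2)
      (nhdsWithin 0 (Set.Ioi 0)) (nhds L) := by
      refine tendsto_finset_sum _ fun j _ => ?_
      exact (((aux_lim k z f U hU hf hcrit _).sub
        (aux_lim k z f U hU hf hcrit _)).div_const _).pow 2
    refine this.congr fun h => ?_
    rw [Finset.sum_div]
    refine Finset.sum_congr rfl fun j _ => ?_
    rw [← sub_div, mul_comm 2 (k + 1), pow_mul, div_right_comm, div_pow _ (h ^ (k + 1))]
    congr 3
    ring
  have hne : ∃ j, j < r ∧ e (j + 1) ^ (k + 1) ≠ e j ^ (k + 1) := by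
    rcases Nat.even_or_odd k with hk | hk
    · refine ⟨0, by omega, fun h => ?_⟩
      have := hk.add_one.strictMono_pow.injective h
      exact absurd this (he 0 1 (by omega) hr).ne'
    · obtain ⟨j, hj, hj2⟩ := hexc.resolve_left (Nat.not_even_iff_odd.2 hk)
      refine ⟨j, by omega, fun h => ?_⟩
      rcases (pow_eq_pow_iff_cases).1 h with h | h | h
      · omega
      · exact (he j (j + 1) (by omega) (by omega)).ne' h
      · exact hj2 (by linarith [h.1])
  have hLpos : 0 < L := by
    obtain ⟨j, hj, hj2⟩ := hne
    refine Finset.sum_pos' (fun _ _ => sq_nonneg _) ⟨j, Finset.mem_range.2 hj, ?_⟩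
    have h1 : e (j + 1) - e j ≠ 0 := (sub_pos.2 (he j (j + 1) (by omega) (by omega))).ne'
    have h2 : c * e (j + 1) ^ (k + 1) - c * e j ^ (k + 1) ≠ 0 := by
      rw [← mul_sub]; exact mul_ne_zero hc0 (sub_ne_zero.2 hj2)
    positivity
  have hev := hlim.eventually (Ioo_mem_nhds (show L / 2 < L by linarith) (show L < 2 * L by linarith))
  obtain ⟨h₀, hh₀, H⟩ := mem_nhdsGT_iff_exists_Ioo_subset.1 hev
  refine ⟨L / 2, 2 * L, h₀, by linarith, by linarith, hh₀, fun h hp hlt => ?_⟩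
  have hpow : 0 < h ^ (2 * (k + 1)) := by positivity
  obtain ⟨ha, hb⟩ := H ⟨hp, hlt⟩
  exact ⟨((lt_div_iff₀ hpow).1 ha).le, ((div_lt_iff₀ hpow).1 hb).le⟩
end

section
/- Let m be an odd positive integer, b > 0 and z real numbers, and let f be of class C^{m+1} on a neighborhood of z with f^{(q)}(z) = 0 for every odd q with 1 ≤ q < m and f^{(m)}(z) ≠ 0. Then the symmetric difference quotient squared g(h) = ((f(z + b·h) − f(z − b·h))/(2b))² satisfies g(h) = Θ(h^{2m}) as h → 0⁺: there exist constants 0 < C₁ ≤ C₂ and h₀ > 0 such that C₁·h^{2m} ≤ g(h) ≤ C₂·h^{2m} for all 0 < h < h₀. -/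
/-- **Symmetric node pair case.** If `m` is odd, all odd-order derivatives of `f` at `z` of
order `< m` vanish and `f^{(m)}(z) ≠ 0`, then the squared symmetric difference quotient
`((f(z+bh) - f(z-bh))/(2b))²` is `Θ(h^{2m})` as `h → 0⁺`. -/
theorem stmt_4 (m : ℕ) (hm : Odd m) (hmpos : 0 < m) (b z : ℝ) (hb : 0 < b)
    (f : ℝ → ℝ) (U : Set ℝ) (hU : U ∈ nhds z)
    (hf : ContDiffOn ℝ (m + 1 : ℕ) f U)
    (hodd : ∀ q : ℕ, Odd q → 1 ≤ q → q < m → iteratedDeriv q f z = 0)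
    (hm0 : iteratedDeriv m f z ≠ 0) :
    ∃ C₁ C₂ h₀ : ℝ, 0 < C₁ ∧ C₁ ≤ C₂ ∧ 0 < h₀ ∧
      ∀ h : ℝ, 0 < h → h < h₀ →
        C₁ * h ^ (2 * m) ≤ ((f (z + b * h) - f (z - b * h)) / (2 * b)) ^ 2 ∧
          ((f (z + b * h) - f (z - b * h)) / (2 * b)) ^ 2 ≤ C₂ * h ^ (2 * m) := by
  obtain ⟨ε, hε, hεU⟩ := Metric.mem_nhds_iff.1 hU
  have hzs : z ∈ Metric.ball z ε := Metric.mem_ball_self hε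
  have hfs : ContDiffOn ℝ m f (Metric.ball z ε) :=
    (hf.mono hεU).of_le (by exact_mod_cast Nat.le_succ m)
  have hT := Real.taylor_tendsto (convex_ball z ε) hzs hfs
  rw [Metric.isOpen_ball.nhdsWithin_eq hzs] at hT
  set T := taylorWithinEval f m (Metric.ball z ε) z with hTdef
  set D := iteratedDeriv m f z with hD
  have hdiff : ∀ t : ℝ, T (z + t) - T (z - t) = 2 * D / (m.factorial : ℝ) * t ^ m := by
    intro t
    rw [hTdef, taylor_within_apply, taylor_within_apply, ← Finset.sum_sub_distrib,
      Finset.sum_eq_single_of_mem m (by simp)]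
    · rw [iteratedDerivWithin_of_isOpen Metric.isOpen_ball hzs]
      have e1 : z + t - z = t := by ring
      have e2 : z - t - z = -t := by ring
      rw [e1, e2, hm.neg_pow, ← hD]
      simp only [smul_eq_mul]
      ring
    · intro k hk hkm
      have hk' : k < m := by
        have := Finset.mem_range.1 hk
        omega
      rw [iteratedDerivWithin_of_isOpen Metric.isOpen_ball hzs]
      have e1 : z + t - z = t := by ring
      have e2 : z - t - z = -t := by ring
      rw [e1, e2]
      rcases Nat.even_or_odd k with he | ho
      · rw [he.neg_pow, sub_self]
      · rw [hodd k ho ho.pos hk']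
        simp
  have t1 : Filter.Tendsto (fun h : ℝ => z + b * h) (nhdsWithin 0 (Set.Ioi 0)) (nhds z) := by
    have : Continuous (fun h : ℝ => z + b * h) := by fun_prop
    simpa using (this.tendsto 0).mono_left nhdsWithin_le_nhds
  have t2 : Filter.Tendsto (fun h : ℝ => z - b * h) (nhdsWithin 0 (Set.Ioi 0)) (nhds z) := by
    have : Continuous (fun h : ℝ => z - b * h) := by fun_prop
    simpa using (this.tendsto 0).mono_left nhdsWithin_le_nhds
  have hlim := ((((hT.comp t1).add (hT.comp t2)).add_const
    (2 * D / (m.factorial : ℝ))).mul_const (b ^ m / (2 * b))).pow 2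
  set M : ℝ := ((0 + 0 + 2 * D / (m.factorial : ℝ)) * (b ^ m / (2 * b))) ^ 2 with hM
  have hfac : (m.factorial : ℝ) ≠ 0 := by positivity
  have hMpos : 0 < M := by
    rw [hM]
    have : (0 + 0 + 2 * D / (m.factorial : ℝ)) * (b ^ m / (2 * b)) ≠ 0 := by
      have hb' := hb.ne'
      simp only [zero_add]
      positivity
    positivity
  have hev := hlim.eventually (Ioo_mem_nhds (show M / 2 < M by linarith)
    (show M < 2 * M by linarith))
  obtain ⟨h₀, hh₀, hsub⟩ := mem_nhdsGT_iff_exists_Ioo_subset.1 hev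
  refine ⟨M / 2, 2 * M, h₀, by linarith, by linarith, hh₀, fun h hh hlt => ?_⟩
  have key := hsub ⟨hh, hlt⟩
  simp only [Set.mem_setOf_eq, Set.mem_Ioo, Function.comp] at key
  have hpos : 0 < h ^ (2 * m) := by positivity
  have heq : ((f (z + b * h) - f (z - b * h)) / (2 * b)) ^ 2 =
      (((f (z + b * h) - T (z + b * h)) / (z + b * h - z) ^ m +
        (f (z - b * h) - T (z - b * h)) / (z - b * h - z) ^ m +
        2 * D / (m.factorial : ℝ)) * (b ^ m / (2 * b))) ^ 2 * h ^ (2 * m) := by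
    have e1 : z + b * h - z = b * h := by ring
    have e2 : z - b * h - z = -(b * h) := by ring
    have e3 : T (z + b * h) = T (z - b * h) + 2 * D / (m.factorial : ℝ) * (b * h) ^ m := by
      linarith [hdiff (b * h)]
    rw [e1, e2, hm.neg_pow, e3, mul_comm 2 m, pow_mul, ← mul_pow, mul_pow b h m]
    congr 1
    have hbm : b ^ m ≠ 0 := by positivity
    have hhm : h ^ m ≠ 0 := by positivity
    have hb' := hb.ne'
    field_simp
    ring
  rw [heq]
  exact ⟨mul_le_mul_of_nonneg_right key.1.le hpos.le, mul_le_mul_of_nonneg_right key.2.le hpos.le⟩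
end

section
/- Let r ≥ 1 be an integer, e_0 < e_1 < ⋯ < e_r and z real numbers, and suppose there is an index j₀ with e_{j₀} < 0 ≤ e_{j₀+1}. Let f_L and f_R be continuous on a neighborhood of z with f_L(z) ≠ f_R(z), and define f(x) = f_L(x) for x < z and f(x) = f_R(x) for x ≥ z. Then the smoothness indicator I(h) = Σ_{j=0}^{r−1} ((f(z + e_{j+1}·h) − f(z + e_j·h))/(e_{j+1} − e_j))² converges, as h → 0⁺, to the strictly positive limit ((f_R(z) − f_L(z))/(e_{j₀+1} − e_{j₀}))². -/
/-- **Smoothness indicator at a jump.** If the stencil `z + eⱼ h` crosses a jump of `f` at `z`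
(with `e_{j₀} < 0 ≤ e_{j₀+1}`), the smoothness indicator converges as `h → 0⁺` to the strictly
positive limit `((f_R(z) - f_L(z))/(e_{j₀+1} - e_{j₀}))²`. -/
theorem stmt_5 (r : ℕ) (hr : 1 ≤ r) (e : ℕ → ℝ)
    (he : ∀ i j : ℕ, i < j → j ≤ r → e i < e j)
    (z : ℝ) (j₀ : ℕ) (hj₀ : j₀ ≤ r - 1)
    (hej : e j₀ < 0) (hej' : 0 ≤ e (j₀ + 1))
    (fL fR f : ℝ → ℝ) (U : Set ℝ) (hU : U ∈ nhds z)
    (hfL : ContinuousOn fL U) (hfR : ContinuousOn fR U)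
    (hjump : fL z ≠ fR z)
    (hf : ∀ x : ℝ, f x = if x < z then fL x else fR x) :
    0 < ((fR z - fL z) / (e (j₀ + 1) - e j₀)) ^ 2 ∧
      Filter.Tendsto
        (fun h : ℝ =>
          ∑ j ∈ Finset.range r,
            ((f (z + e (j + 1) * h) - f (z + e j * h)) / (e (j + 1) - e j)) ^ 2)
        (nhdsWithin 0 (Set.Ioi 0))
        (nhds (((fR z - fL z) / (e (j₀ + 1) - e j₀)) ^ 2)) := by
  have hlin : ∀ c : ℝ, Filter.Tendsto (fun h : ℝ => z + c * h)
      (nhdsWithin 0 (Set.Ioi 0)) (nhds z) := by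
    intro c
    have h1 : Continuous (fun h : ℝ => z + c * h) := by fun_prop
    have h2 := h1.tendsto 0
    simp only [mul_zero, add_zero] at h2
    exact h2.mono_left nhdsWithin_le_nhds
  have hcL : ContinuousAt fL z := hfL.continuousAt hU
  have hcR : ContinuousAt fR z := hfR.continuousAt hU
  have hlim : ∀ c : ℝ, Filter.Tendsto (fun h : ℝ => f (z + c * h))
      (nhdsWithin 0 (Set.Ioi 0)) (nhds (if c < 0 then fL z else fR z)) := by
    intro c
    by_cases hc : c < 0
    · rw [if_pos hc]
      refine (hcL.tendsto.comp (hlin c)).congr' ?_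
      filter_upwards [self_mem_nhdsWithin] with h hh
      have hh' : 0 < h := hh
      have : z + c * h < z := by nlinarith
      simp [hf, this]
    · rw [if_neg hc]
      refine (hcR.tendsto.comp (hlin c)).congr' ?_
      filter_upwards [self_mem_nhdsWithin] with h hh
      have hh' : 0 < h := hh
      have : ¬ (z + c * h < z) := by
        have := mul_nonneg (not_lt.mp hc) hh'.le
        linarith
      rw [hf, if_neg this]
      rfl
  have hlt : e j₀ < e (j₀ + 1) := lt_of_lt_of_le hej hej'
  constructor
  · have h1 : fR z - fL z ≠ 0 := sub_ne_zero.mpr hjump.symm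
    have h2 : e (j₀ + 1) - e j₀ ≠ 0 := sub_ne_zero.mpr hlt.ne'
    have := div_ne_zero h1 h2
    positivity
  · have key : Filter.Tendsto
        (fun h : ℝ =>
          ∑ j ∈ Finset.range r,
            ((f (z + e (j + 1) * h) - f (z + e j * h)) / (e (j + 1) - e j)) ^ 2)
        (nhdsWithin 0 (Set.Ioi 0))
        (nhds (∑ j ∈ Finset.range r,
          (((if e (j + 1) < 0 then fL z else fR z) - (if e j < 0 then fL z else fR z))
            / (e (j + 1) - e j)) ^ 2)) :=
      tendsto_finsetSum _ fun j _ =>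
        (((hlim (e (j + 1))).sub (hlim (e j))).div_const _).pow 2
    rw [Finset.sum_eq_single j₀] at key
    · rwa [if_pos hej, if_neg (not_lt.mpr hej')] at key
    · intro j hj hne
      have hjr := Finset.mem_range.mp hj
      rcases lt_or_gt_of_ne hne with h | h
      · have h1 : e (j + 1) < 0 := by
          rcases Nat.lt_or_ge (j + 1) j₀ with h' | h'
          · exact (he _ _ h' (by omega)).trans hej
          · have : j + 1 = j₀ := by omega
            rwa [this]
        have h2 : e j < 0 := (he j (j + 1) (by omega) (by omega)).trans h1
        simp [h1, h2]
      · have h2 : 0 ≤ e j := by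
          rcases Nat.lt_or_ge (j₀ + 1) j with h' | h'
          · exact hej'.trans (he _ _ h' (by omega)).le
          · have : j = j₀ + 1 := by omega
            rwa [this]
        have h1 : 0 ≤ e (j + 1) := h2.trans (he j (j + 1) (by omega) (by omega)).le
        simp [not_lt.mpr h1, not_lt.mpr h2]
    · intro h
      exact absurd (Finset.mem_range.mpr (by omega)) h
end

section
/- Assume the WENO weight setup with f of class C^∞ on a neighborhood of z having a critical point of exact order k at z with 0 ≤ k ≤ R−2, and assume that either R ≥ 5, or k is even, or c_j + c_{j+1} ≠ 0 for every 0 ≤ j ≤ R−2. Then there exist C > 0 and h₀ > 0 such that for every ε > 0, every 0 < h < h₀ and every 0 ≤ i ≤ r': |α_{R,i,h} − 1/(r'+1)| ≤ C·h^{2s(R−2−k)}. -/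
/-- Simple smoothness indicator `I_{R,i,h}` on the nonuniform stencil `x_{i,h} = z + cᵢ h`,
with `r = ⌊(R-1)/2⌋`. -/
noncomputable def wenoI (R : ℕ) (c : ℕ → ℝ) (z : ℝ) (f : ℝ → ℝ) (i : ℕ) (h : ℝ) : ℝ :=
  ∑ j ∈ Finset.Ico i (i + (R - 1) / 2),
    ((f (z + c (j + 1) * h) - f (z + c j * h)) / (c (j + 1) - c j)) ^ 2

/-- Squared undivided difference `d_{R,h}` of `f` on the full stencil. -/
noncomputable def wenoD (R : ℕ) (c : ℕ → ℝ) (z : ℝ) (f : ℝ → ℝ) (h : ℝ) : ℝ :=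
  (((R - 1).factorial : ℝ) *
      ∑ i ∈ Finset.range R,
        f (z + c i * h) / ∏ j ∈ (Finset.range R).erase i, (c i - c j)) ^ 2

/-- Unnormalized WENO weight `α_{R,i,h}`, with `r' = ⌈(R-1)/2⌉ = R/2` (ℕ-division). -/
noncomputable def wenoAlpha (R : ℕ) (c : ℕ → ℝ) (z : ℝ) (f : ℝ → ℝ) (s : ℕ) (ε : ℝ)
    (i : ℕ) (h : ℝ) : ℝ :=
  (1 / (((R / 2 : ℕ) : ℝ) + 1)) *
    (1 + (wenoD R c z f h) ^ s / ((wenoI R c z f i h) ^ s + ε))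

/-- Normalized WENO weight `ω_{R,i,h}`. -/
noncomputable def wenoOmega (R : ℕ) (c : ℕ → ℝ) (z : ℝ) (f : ℝ → ℝ) (s : ℕ) (ε : ℝ)
    (i : ℕ) (h : ℝ) : ℝ :=
  wenoAlpha R c z f s ε i h / ∑ j ∈ Finset.range (R / 2 + 1), wenoAlpha R c z f s ε j h

/-- Global average weight `ω_{R,h}`. -/
noncomputable def wenoOmegaG (R : ℕ) (c : ℕ → ℝ) (z : ℝ) (f : ℝ → ℝ) (s : ℕ) (ε : ℝ)
    (h : ℝ) : ℝ :=
  1 / (1 + (wenoD R c z f h) ^ s *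
        ∑ i ∈ Finset.range (R / 2 + 1), 1 / ((wenoI R c z f i h) ^ s + ε))


open Filter Topology Asymptotics in
lemma aux_taylor (z : ℝ) (f : ℝ → ℝ) (U : Set ℝ) (hU : U ∈ nhds z)
    (hf : ContDiffOn ℝ (⊤ : ℕ∞) f U) (n : ℕ) (a : ℝ) :
    (fun h : ℝ => f (z + a * h) -
      ∑ j ∈ Finset.range (n + 1), (iteratedDeriv j f z / j.factorial) * (a * h) ^ j)
      =o[𝓝 0] fun h : ℝ => h ^ n := by
  obtain ⟨δ, hδ, hball⟩ := Metric.mem_nhds_iff.1 hU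
  have hz : z ∈ Metric.ball z δ := Metric.mem_ball_self hδ
  have h1 := taylor_isLittleO (n := n) (convex_ball z δ) hz
    ((hf.mono hball).of_le (by exact_mod_cast le_top))
  rw [Metric.isOpen_ball.nhdsWithin_eq hz] at h1
  have ht : Tendsto (fun h : ℝ => z + a * h) (𝓝 0) (𝓝 z) := by
    have : Continuous (fun h : ℝ => z + a * h) := by fun_prop
    simpa using this.tendsto 0
  have h2 := h1.comp_tendsto ht
  have h3 : (fun h : ℝ => f (z + a * h) -
      ∑ j ∈ Finset.range (n + 1), (iteratedDeriv j f z / j.factorial) * (a * h) ^ j)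
      =o[𝓝 0] fun h : ℝ => a ^ n * h ^ n := by
    refine h2.congr (fun h => ?_) (fun h => ?_)
    · simp only [Function.comp, taylor_within_apply]
      congr 1
      refine Finset.sum_congr rfl fun j _ => ?_
      rw [iteratedDerivWithin_of_isOpen Metric.isOpen_ball hz, smul_eq_mul]
      simp only [add_sub_cancel_left]
      ring
    · simp [Function.comp, mul_pow]
  exact h3.trans_isBigO (isBigO_const_mul_self _ _ _)

open Filter Topology Asymptotics in
lemma aux_D (R : ℕ) (hR : 3 ≤ R) (c : ℕ → ℝ)
    (hc : ∀ i j : ℕ, i < j → j < R → c i < c j)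
    (z : ℝ) (f : ℝ → ℝ) (U : Set ℝ) (hU : U ∈ nhds z)
    (hf : ContDiffOn ℝ (⊤ : ℕ∞) f U) :
    (fun h => wenoD R c z f h) =O[𝓝 0] fun h : ℝ => (h ^ (R - 1)) ^ 2 := by
  unfold wenoD
  suffices hmain : (fun h : ℝ => ∑ i ∈ Finset.range R,
      f (z + c i * h) / ∏ j ∈ (Finset.range R).erase i, (c i - c j)) =O[𝓝 0]
      fun h : ℝ => h ^ (R - 1) from (hmain.const_mul_left _).pow 2
  have hinj : Set.InjOn c (Finset.range R : Set ℕ) := by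
    intro i hi j hj hij
    simp only [Finset.coe_range, Set.mem_Iio] at hi hj
    rcases lt_trichotomy i j with h | h | h
    · exact absurd hij (hc i j h hj).ne
    · exact h
    · exact absurd hij (hc j i h hi).ne'
  set A : ℕ → ℝ := fun j => iteratedDeriv j f z / j.factorial with hA
  set w : ℕ → ℝ := fun i => ∏ j ∈ (Finset.range R).erase i, (c i - c j) with hw
  have key : ∀ h : ℝ, ∑ i ∈ Finset.range R,
      (∑ j ∈ Finset.range (R - 1 + 1), A j * (c i * h) ^ j) / w i = A (R - 1) * h ^ (R - 1) := by
    intro h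
    let P : Polynomial ℝ := ∑ j ∈ Finset.range R, Polynomial.monomial j (A j * h ^ j)
    have hdeg : P.degree < (Finset.range R).card := by
      rw [Finset.card_range]
      refine (Polynomial.degree_sum_le _ _).trans_lt ?_
      rw [Finset.sup_lt_iff (by exact WithBot.bot_lt_coe R)]
      intro j hj
      exact (Polynomial.degree_monomial_le _ _).trans_lt (by exact_mod_cast Finset.mem_range.1 hj)
    have h1 := Lagrange.coeff_eq_sum hinj hdeg
    have h2 : P.coeff ((Finset.range R).card - 1) = A (R - 1) * h ^ (R - 1) := by
      simp only [P, Polynomial.finsetSum_coeff, Polynomial.coeff_monomial, Finset.card_range]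
      rw [Finset.sum_ite_eq' (Finset.range R) (R-1), if_pos (Finset.mem_range.2 (by omega))]
    rw [← h2, h1]
    refine Finset.sum_congr rfl fun i _ => ?_
    congr 1
    rw [show R - 1 + 1 = R by omega]
    simp only [P, Polynomial.eval_finsetSum, Polynomial.eval_monomial]
    refine Finset.sum_congr rfl fun j _ => ?_
    ring
  have h1 : (fun h : ℝ => ∑ i ∈ Finset.range R, (f (z + c i * h) -
      ∑ j ∈ Finset.range (R - 1 + 1), A j * (c i * h) ^ j) / w i) =O[𝓝 0]
      fun h : ℝ => h ^ (R - 1) := by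
    refine IsBigO.fun_sum fun i _ => ?_
    simp only [div_eq_mul_inv _ (w i), mul_comm _ (w i)⁻¹]
    exact (aux_taylor z f U hU hf (R - 1) (c i)).isBigO.const_mul_left _
  have h2 := h1.add (isBigO_const_mul_self (A (R - 1)) (fun h : ℝ => h ^ (R - 1)) (𝓝 0))
  refine h2.congr_left fun h => ?_
  simp only [← key h, ← Finset.sum_add_distrib]
  refine Finset.sum_congr rfl fun i _ => ?_
  ring

open Filter Topology Asymptotics in
lemma aux_diff (c : ℕ → ℝ)
    (z : ℝ) (f : ℝ → ℝ) (U : Set ℝ) (hU : U ∈ nhds z)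
    (hf : ContDiffOn ℝ (⊤ : ℕ∞) f U)
    (k : ℕ)
    (hcrit : ∀ j : ℕ, 1 ≤ j → j ≤ k → iteratedDeriv j f z = 0)
    (hk1 : iteratedDeriv (k + 1) f z ≠ 0) (j : ℕ)
    (hj : c (j + 1) ^ (k + 1) ≠ c j ^ (k + 1)) :
    (fun h : ℝ => h ^ (k + 1)) =O[𝓝 0]
      fun h : ℝ => (f (z + c (j + 1) * h) - f (z + c j * h)) := by
  have hT : ∀ a : ℝ, (fun h : ℝ => f (z + a * h) - (f z + iteratedDeriv (k+1) f z /
      (k+1).factorial * (a * h) ^ (k+1))) =o[𝓝 0] fun h : ℝ => h ^ (k + 1) := by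
    intro a
    refine (aux_taylor z f U hU hf (k + 1) a).congr_left fun h => ?_
    congr 1
    rw [Finset.sum_range_succ, Finset.sum_range_succ', Finset.sum_eq_zero]
    · simp
    · intro j hj
      rw [hcrit (j + 1) (by omega) (by have := Finset.mem_range.1 hj; omega)]
      simp
  set b := iteratedDeriv (k+1) f z / (k+1).factorial * (c (j+1) ^ (k+1) - c j ^ (k+1)) with hb
  have hb0 : b ≠ 0 := by
    refine mul_ne_zero (div_ne_zero hk1 ?_) (sub_ne_zero.2 hj)
    exact_mod_cast (Nat.factorial_pos _).ne'
  have h1 : (fun h : ℝ => (f (z + c (j + 1) * h) - f (z + c j * h)) - b * h ^ (k+1))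
      =o[𝓝 0] fun h : ℝ => b * h ^ (k + 1) := by
    refine (((hT (c (j+1))).sub (hT (c j))).congr_left fun h => ?_).trans_isBigO
      (isBigO_self_const_mul hb0 _ _)
    rw [hb]; ring
  have h2 : (fun h : ℝ => b * h ^ (k+1)) =O[𝓝 0]
      fun h : ℝ => (f (z + c (j + 1) * h) - f (z + c j * h)) := by
    have := h1.right_isBigO_add
    simpa using this
  exact (isBigO_self_const_mul hb0 _ _).trans h2

open Filter Topology Asymptotics in
lemma aux_I (R : ℕ) (hR : 3 ≤ R) (c : ℕ → ℝ)
    (hc : ∀ i j : ℕ, i < j → j < R → c i < c j)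
    (z : ℝ) (f : ℝ → ℝ) (U : Set ℝ) (hU : U ∈ nhds z)
    (hf : ContDiffOn ℝ (⊤ : ℕ∞) f U)
    (k : ℕ)
    (hcrit : ∀ j : ℕ, 1 ≤ j → j ≤ k → iteratedDeriv j f z = 0)
    (hk1 : iteratedDeriv (k + 1) f z ≠ 0)
    (hexc : 5 ≤ R ∨ Even k ∨ ∀ j : ℕ, j ≤ R - 2 → c j + c (j + 1) ≠ 0)
    (i : ℕ) (hi : i ≤ R / 2) :
    (fun h : ℝ => (h ^ (k + 1)) ^ 2) =O[𝓝 0] fun h => wenoI R c z f i h := by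
  have hex : ∃ j ∈ Finset.Ico i (i + (R - 1) / 2), c (j + 1) ^ (k + 1) ≠ c j ^ (k + 1) := by
    have hsum : ∀ j, j ≤ R - 2 → c (j + 1) ^ (k + 1) = c j ^ (k + 1) →
        ¬ Even k ∧ c j + c (j + 1) = 0 := by
      intro j hj he
      have hlt := hc j (j + 1) (by omega) (by omega)
      have hk : ¬ Even k := by
        intro hk
        exact hlt.ne' ((hk.add_one.strictMono_pow (R := ℝ)).injective he)
      refine ⟨hk, ?_⟩
      have := (pow_eq_pow_iff_cases).1 he
      rcases this with h | h | h
      · omega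
      · exact absurd h hlt.ne'
      · linarith [h.1]
    by_contra hcon
    push Not at hcon
    have hi0 := hsum i (by omega) (hcon i (Finset.mem_Ico.2 (by omega)))
    rcases hexc with h | h | h
    · have hi1 := hsum (i + 1) (by omega) (hcon (i + 1) (Finset.mem_Ico.2 (by omega)))
      have := hc i (i + 1 + 1) (by omega) (by omega)
      linarith [hi0.2, hi1.2]
    · exact hi0.1 h
    · exact h i (by omega) hi0.2
  obtain ⟨j, hj, hjc⟩ := hex
  have hjR : c j < c (j + 1) := hc j (j + 1) (by omega) (by have := Finset.mem_Ico.1 hj; omega)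
  have h1 := (aux_diff c z f U hU hf k hcrit hk1 j hjc).trans
    (isBigO_self_const_mul (inv_ne_zero (sub_pos.2 hjR).ne') _ _)
  refine (h1.pow 2).trans (IsBigO.of_bound 1 (Eventually.of_forall fun h => ?_))
  rw [one_mul, Real.norm_of_nonneg (by positivity)]
  refine le_trans ?_ (Real.le_norm_self _)
  unfold wenoI
  rw [inv_mul_eq_div]
  exact Finset.single_le_sum (f := fun j => ((f (z + c (j + 1) * h) - f (z + c j * h)) /
    (c (j + 1) - c j)) ^ 2) (fun _ _ => sq_nonneg _) hj

/-- **Unnormalized weights in the smooth case.** If `f` is `C^∞` near `z` with a critical point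
of exact order `k ≤ R-2`, and either `R ≥ 5`, or `k` is even, or no node pair is symmetric,
then `α_{R,i,h} = 1/(r'+1) + O(h^{2s(R-2-k)})`, uniformly in `ε > 0`. -/
theorem stmt_6 (R : ℕ) (hR : 3 ≤ R) (c : ℕ → ℝ)
    (hc : ∀ i j : ℕ, i < j → j < R → c i < c j)
    (z : ℝ) (f : ℝ → ℝ) (U : Set ℝ) (hU : U ∈ nhds z)
    (hf : ContDiffOn ℝ (⊤ : ℕ∞) f U)
    (k : ℕ) (hk : k ≤ R - 2)
    (hcrit : ∀ j : ℕ, 1 ≤ j → j ≤ k → iteratedDeriv j f z = 0)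
    (hk1 : iteratedDeriv (k + 1) f z ≠ 0)
    (hexc : 5 ≤ R ∨ Even k ∨ ∀ j : ℕ, j ≤ R - 2 → c j + c (j + 1) ≠ 0)
    (s : ℕ) (hs : 1 ≤ s) :
    ∃ C > (0 : ℝ), ∃ h₀ > (0 : ℝ), ∀ ε > (0 : ℝ), ∀ h : ℝ, 0 < h → h < h₀ →
      ∀ i ≤ R / 2,
        |wenoAlpha R c z f s ε i h - 1 / (((R / 2 : ℕ) : ℝ) + 1)|
          ≤ C * h ^ (2 * s * (R - 2 - k)) := by
  obtain ⟨C₁, hC₁, hD⟩ := (aux_D R hR c hc z f U hU hf).exists_pos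
  have hI : ∃ C₂ > (0 : ℝ), ∀ᶠ h in nhds (0 : ℝ), ∀ i ≤ R / 2,
      (h ^ (k + 1)) ^ 2 ≤ C₂ * wenoI R c z f i h := by
    have h1 : ∀ i, ∃ K > (0 : ℝ), i ≤ R / 2 → ∀ᶠ h in nhds (0 : ℝ),
        (h ^ (k + 1)) ^ 2 ≤ K * wenoI R c z f i h := by
      intro i
      by_cases hi : i ≤ R / 2
      · obtain ⟨K, hK, hb⟩ := (aux_I R hR c hc z f U hU hf k hcrit hk1 hexc i hi).exists_pos
        refine ⟨K, hK, fun _ => ?_⟩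
        filter_upwards [hb.bound] with h hh
        rw [Real.norm_of_nonneg (by positivity), Real.norm_of_nonneg
          (show 0 ≤ wenoI R c z f i h from Finset.sum_nonneg fun _ _ => sq_nonneg _)] at hh
        exact hh
      · exact ⟨1, one_pos, fun h => absurd h hi⟩
    choose K hK hb using h1
    refine ⟨∑ i ∈ Finset.range (R / 2 + 1), K i,
      Finset.sum_pos (fun i _ => hK i) ⟨0, by simp⟩, ?_⟩
    have : ∀ᶠ h in nhds (0 : ℝ), ∀ i ∈ Finset.range (R / 2 + 1),
        (h ^ (k + 1)) ^ 2 ≤ K i * wenoI R c z f i h := by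
      rw [Filter.eventually_all_finset]
      intro i hi
      exact hb i (by have := Finset.mem_range.1 hi; omega)
    filter_upwards [this] with h hh i hi
    have hmem : i ∈ Finset.range (R / 2 + 1) := Finset.mem_range.2 (by omega)
    refine (hh i hmem).trans (mul_le_mul_of_nonneg_right ?_
      (Finset.sum_nonneg fun _ _ => sq_nonneg _))
    exact Finset.single_le_sum (f := K) (fun i _ => (hK i).le) hmem
  obtain ⟨C₂, hC₂, hI⟩ := hI
  obtain ⟨h₀, hh₀, hball⟩ := Metric.eventually_nhds_iff.1 (hD.bound.and hI)
  refine ⟨(C₁ * C₂) ^ s, by positivity, h₀, hh₀, ?_⟩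
  intro ε hε h hpos hlt i hi
  obtain ⟨hd, hi'⟩ := hball (y := h) (by simpa [abs_of_pos hpos] using hlt)
  replace hi' := hi' i hi
  have hI0 : 0 ≤ wenoI R c z f i h := Finset.sum_nonneg fun _ _ => sq_nonneg _
  have hD0 : 0 ≤ wenoD R c z f h := sq_nonneg _
  rw [Real.norm_of_nonneg hD0, Real.norm_of_nonneg (by positivity)] at hd
  set I := wenoI R c z f i h with hIdef
  set D := wenoD R c z f h with hDdef
  set m := R - 2 - k with hm
  have hDI : D ≤ C₁ * C₂ * h ^ (2 * m) * I := by
    calc D ≤ C₁ * (h ^ (R - 1)) ^ 2 := hd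
      _ = C₁ * h ^ (2 * m) * (h ^ (k + 1)) ^ 2 := by
        rw [show R - 1 = m + (k + 1) by omega]; ring
      _ ≤ C₁ * h ^ (2 * m) * (C₂ * I) := by gcongr
      _ = _ := by ring
  have hq : D ^ s / (I ^ s + ε) ≤ (C₁ * C₂) ^ s * h ^ (2 * s * m) := by
    have hIs : 0 ≤ I ^ s := by positivity
    rw [div_le_iff₀ (by positivity)]
    calc D ^ s ≤ (C₁ * C₂ * h ^ (2 * m) * I) ^ s := by gcongr
      _ = (C₁ * C₂) ^ s * h ^ (2 * s * m) * I ^ s := by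
        rw [mul_pow, mul_pow, ← pow_mul, show 2 * m * s = 2 * s * m by ring]
      _ ≤ _ := by gcongr; linarith
  have hr : (0 : ℝ) ≤ ((R / 2 : ℕ) : ℝ) := Nat.cast_nonneg _
  have hq0 : 0 ≤ D ^ s / (I ^ s + ε) := by positivity
  have hle : 1 / (((R / 2 : ℕ) : ℝ) + 1) ≤ 1 := by
    rw [div_le_one (by positivity)]; linarith
  have hge : 0 ≤ 1 / (((R / 2 : ℕ) : ℝ) + 1) := by positivity
  have heq : wenoAlpha R c z f s ε i h - 1 / (((R / 2 : ℕ) : ℝ) + 1) =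
      1 / (((R / 2 : ℕ) : ℝ) + 1) * (D ^ s / (I ^ s + ε)) := by
    unfold wenoAlpha
    rw [← hIdef, ← hDdef]; ring
  rw [heq, abs_of_nonneg (by positivity)]
  calc _ ≤ 1 * (D ^ s / (I ^ s + ε)) := by gcongr
    _ ≤ _ := by rw [one_mul]; exact hq
end

section
/- Assume the WENO weight setup with f of class C^∞ on a neighborhood of z having a critical point of exact order k at z with 0 ≤ k ≤ R−2, and assume that either R ≥ 5, or k is even, or c_j + c_{j+1} ≠ 0 for every 0 ≤ j ≤ R−2. Then for every ε > 0 and h > 0 the weights satisfy 0 ≤ ω_{R,i,h} ≤ 1 and Σ_{i=0}^{r'} ω_{R,i,h} = 1, and there exist C > 0 and h₀ > 0 such that for every ε > 0, every 0 < h < h₀ and every 0 ≤ i ≤ r': |ω_{R,i,h} − 1/(r'+1)| ≤ C·h^{2s(R−2−k)}. -/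
open Filter Topology Asymptotics in
lemma weno_taylor (z : ℝ) (f : ℝ → ℝ) (U : Set ℝ) (hU : U ∈ nhds z)
    (hf : ContDiffOn ℝ (⊤ : ℕ∞) f U) (n : ℕ) (c : ℝ) :
    (fun h : ℝ => f (z + c * h) - ∑ j ∈ Finset.range (n + 1),
      ((j.factorial : ℝ)⁻¹ * (c * h) ^ j) * iteratedDeriv j f z) =o[𝓝 0] fun h => h ^ n := by
  obtain ⟨δ, hδ, hb⟩ := Metric.mem_nhds_iff.1 hU
  have hz : z ∈ Metric.ball z δ := Metric.mem_ball_self hδ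
  have h1 := taylor_isLittleO (n := n) (convex_ball z δ) hz
    ((hf.mono hb).of_le (by exact_mod_cast le_top))
  rw [nhdsWithin_eq_nhds.2 (Metric.ball_mem_nhds z hδ)] at h1
  have ht : Tendsto (fun h : ℝ => z + c * h) (𝓝 0) (𝓝 z) := by
    have : Continuous (fun h : ℝ => z + c * h) := by fun_prop
    simpa using this.tendsto 0
  have h2 := h1.comp_tendsto ht
  have h3 : ((fun x : ℝ => (x - z) ^ n) ∘ fun h : ℝ => z + c * h) =O[𝓝 0] fun h => h ^ n := by
    refine IsBigO.of_bound (|c| ^ n) (Eventually.of_forall fun h => ?_)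
    simp [mul_pow]
  refine (h2.trans_isBigO h3).congr_left fun h => ?_
  simp only [Function.comp, taylor_within_apply, smul_eq_mul, add_sub_cancel_left]
  congr 1
  refine Finset.sum_congr rfl fun j _ => ?_
  rw [iteratedDerivWithin_of_isOpen Metric.isOpen_ball hz]

open Polynomial in
lemma weno_dd (R : ℕ) (c : ℕ → ℝ) (hc : ∀ i j : ℕ, i < j → j < R → c i < c j)
    (j : ℕ) (hj : j < R - 1) :
    ∑ i ∈ Finset.range R, c i ^ j / ∏ l ∈ (Finset.range R).erase i, (c i - c l) = 0 := by
  have hinj : Set.InjOn c (Finset.range R : Finset ℕ) := by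
    intro a ha b hb hab
    simp only [Finset.coe_range, Set.mem_Iio] at ha hb
    rcases lt_trichotomy a b with h | h | h
    · exact absurd hab (hc a b h hb).ne
    · exact h
    · exact absurd hab (hc b a h ha).ne'
  have := Lagrange.coeff_eq_sum hinj (P := (X ^ j : ℝ[X])) (by
    rw [degree_X_pow, Finset.card_range]; exact_mod_cast (by omega : j < R))
  simp only [eval_pow, eval_X, Finset.card_range] at this
  rw [← this, coeff_X_pow, if_neg (by omega)]

open Filter Topology Asymptotics in
lemma weno_D_bound (R : ℕ) (hR : 3 ≤ R) (c : ℕ → ℝ)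
    (hc : ∀ i j : ℕ, i < j → j < R → c i < c j)
    (z : ℝ) (f : ℝ → ℝ) (U : Set ℝ) (hU : U ∈ nhds z)
    (hf : ContDiffOn ℝ (⊤ : ℕ∞) f U) :
    ∃ A > 0, ∀ᶠ h in 𝓝 (0 : ℝ), wenoD R c z f h ≤ A * (h ^ (R - 1)) ^ 2 := by
  set w : ℕ → ℝ := fun i => ∏ l ∈ (Finset.range R).erase i, (c i - c l) with hw
  set a : ℕ → ℝ := fun j => (j.factorial : ℝ)⁻¹ * iteratedDeriv j f z with ha
  have key : (fun h : ℝ => ((R - 1).factorial : ℝ) * ∑ i ∈ Finset.range R, f (z + c i * h) / w i)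
      =O[𝓝 0] fun h => h ^ (R - 1) := by
    apply IsBigO.const_mul_left
    have h1 : (fun h : ℝ => ∑ i ∈ Finset.range R, (f (z + c i * h) -
        ∑ j ∈ Finset.range (R - 1 + 1),
          ((j.factorial : ℝ)⁻¹ * (c i * h) ^ j) * iteratedDeriv j f z) * (w i)⁻¹)
        =O[𝓝 0] fun h => h ^ (R - 1) := by
      apply IsBigO.fun_sum
      intro i _
      have := ((weno_taylor z f U hU hf (R - 1) (c i)).isBigO).const_mul_left (w i)⁻¹
      exact this.congr_left fun h => mul_comm _ _
    have h2 : (fun h : ℝ => (a (R - 1) * ∑ i ∈ Finset.range R, c i ^ (R - 1) / w i) * h ^ (R - 1))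
        =O[𝓝 0] fun h => h ^ (R - 1) :=
      (isBigO_refl _ _).const_mul_left _
    refine (h1.add h2).congr_left fun h => ?_
    have h3 : ∑ i ∈ Finset.range R, (∑ j ∈ Finset.range (R - 1 + 1),
          ((j.factorial : ℝ)⁻¹ * (c i * h) ^ j) * iteratedDeriv j f z) * (w i)⁻¹
        = (a (R - 1) * ∑ i ∈ Finset.range R, c i ^ (R - 1) / w i) * h ^ (R - 1) := by
      have : ∀ i ∈ Finset.range R, (∑ j ∈ Finset.range (R - 1 + 1),
          ((j.factorial : ℝ)⁻¹ * (c i * h) ^ j) * iteratedDeriv j f z) * (w i)⁻¹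
          = ∑ j ∈ Finset.range (R - 1 + 1), a j * h ^ j * (c i ^ j / w i) := by
        intro i _
        rw [Finset.sum_mul]
        refine Finset.sum_congr rfl fun j _ => ?_
        simp only [ha, mul_pow, div_eq_mul_inv]; ring
      rw [Finset.sum_congr rfl this, Finset.sum_comm, Finset.sum_range_succ,
        Finset.sum_eq_zero, ← Finset.mul_sum]
      · ring
      · intro j hj
        rw [← Finset.mul_sum, weno_dd R c hc j (Finset.mem_range.1 hj), mul_zero]
    rw [← h3, ← Finset.sum_add_distrib]
    refine Finset.sum_congr rfl fun i _ => ?_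
    rw [div_eq_mul_inv]; ring
  obtain ⟨C, hC, hb⟩ := key.exists_pos
  refine ⟨C ^ 2, by positivity, ?_⟩
  filter_upwards [hb.bound] with h hh
  rw [← mul_pow]
  unfold wenoD
  rw [sq_le_sq]
  simpa [abs_mul, abs_of_pos hC] using hh

open Filter Topology Asymptotics in
lemma weno_diff_bound (z : ℝ) (f : ℝ → ℝ) (U : Set ℝ) (hU : U ∈ nhds z)
    (hf : ContDiffOn ℝ (⊤ : ℕ∞) f U) (k : ℕ)
    (hcrit : ∀ j : ℕ, 1 ≤ j → j ≤ k → iteratedDeriv j f z = 0)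
    (hk1 : iteratedDeriv (k + 1) f z ≠ 0) (p q : ℝ) (hpq : p < q)
    (hne : q ^ (k + 1) ≠ p ^ (k + 1)) :
    ∃ B > 0, ∀ᶠ h in 𝓝 (0 : ℝ),
      B * (h ^ (k + 1)) ^ 2 ≤ ((f (z + q * h) - f (z + p * h)) / (q - p)) ^ 2 := by
  set L : ℝ := (((k + 1).factorial : ℝ)⁻¹ * iteratedDeriv (k + 1) f z) *
    (q ^ (k + 1) - p ^ (k + 1)) with hL
  have hL0 : L ≠ 0 := by
    refine mul_ne_zero (mul_ne_zero (by positivity) hk1) (sub_ne_zero.2 hne)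
  have hL' : 0 < |L| := abs_pos.2 hL0
  have T : ∀ x h : ℝ, ∑ j ∈ Finset.range (k + 1 + 1),
      ((j.factorial : ℝ)⁻¹ * (x * h) ^ j) * iteratedDeriv j f z = f z +
      (((k + 1).factorial : ℝ)⁻¹ * iteratedDeriv (k + 1) f z) * x ^ (k + 1) * h ^ (k + 1) := by
    intro x h
    rw [Finset.sum_range_succ, Finset.sum_range_succ', Finset.sum_eq_zero]
    · simp [mul_pow]; ring
    · intro j hj
      rw [hcrit (j + 1) (by omega) (by have := Finset.mem_range.1 hj; omega), mul_zero]
  have h1 := (weno_taylor z f U hU hf (k + 1) q).sub (weno_taylor z f U hU hf (k + 1) p)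
  have h2 := h1.def (half_pos hL')
  refine ⟨(|L| / 2 / (q - p)) ^ 2, ?_, ?_⟩
  · have : 0 < q - p := sub_pos.2 hpq
    positivity
  filter_upwards [h2] with h hh
  have hqp : 0 < q - p := sub_pos.2 hpq
  rw [T, T, Real.norm_eq_abs, Real.norm_eq_abs] at hh
  have e : f (z + q * h) - (f z + (((k + 1).factorial : ℝ)⁻¹ * iteratedDeriv (k + 1) f z) *
      q ^ (k + 1) * h ^ (k + 1)) - (f (z + p * h) - (f z + (((k + 1).factorial : ℝ)⁻¹ *
      iteratedDeriv (k + 1) f z) * p ^ (k + 1) * h ^ (k + 1))) =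
      (f (z + q * h) - f (z + p * h)) - L * h ^ (k + 1) := by rw [hL]; ring
  rw [e] at hh
  rw [← mul_pow, sq_le_sq, abs_div, abs_mul, abs_of_pos hqp, abs_div, abs_of_pos hqp,
    abs_of_pos (half_pos hL'), div_mul_eq_mul_div]
  gcongr
  have h4 : |L * h ^ (k + 1)| - |f (z + q * h) - f (z + p * h)| ≤
      |(f (z + q * h) - f (z + p * h)) - L * h ^ (k + 1)| := by
    rw [abs_sub_comm (f (z + q * h) - f (z + p * h))]
    exact abs_sub_abs_le_abs_sub _ _
  rw [abs_mul] at h4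
  linarith

lemma weno_pow_ne {k : ℕ} {p q : ℝ} (hpq : p < q) (h : Even k ∨ p + q ≠ 0) :
    q ^ (k + 1) ≠ p ^ (k + 1) := by
  intro e
  rcases Nat.even_or_odd k with hk | hk
  · exact (hk.add_one.strictMono_pow hpq).ne' e
  · have h' : p + q ≠ 0 := h.resolve_left (by simpa using hk)
    have : |q| = |p| := by
      have := congrArg abs e
      rw [abs_pow, abs_pow] at this
      exact (pow_left_inj₀ (abs_nonneg _) (abs_nonneg _) (by omega)).1 this
    rcases abs_eq_abs.1 this with h1 | h1
    · linarith
    · exact h' (by linarith)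

open Filter Topology Asymptotics in
lemma weno_I_bound (R : ℕ) (hR : 3 ≤ R) (c : ℕ → ℝ)
    (hc : ∀ i j : ℕ, i < j → j < R → c i < c j)
    (z : ℝ) (f : ℝ → ℝ) (U : Set ℝ) (hU : U ∈ nhds z)
    (hf : ContDiffOn ℝ (⊤ : ℕ∞) f U)
    (k : ℕ)
    (hcrit : ∀ j : ℕ, 1 ≤ j → j ≤ k → iteratedDeriv j f z = 0)
    (hk1 : iteratedDeriv (k + 1) f z ≠ 0)
    (hexc : 5 ≤ R ∨ Even k ∨ ∀ j : ℕ, j ≤ R - 2 → c j + c (j + 1) ≠ 0)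
    (i : ℕ) (hi : i ≤ R / 2) :
    ∃ B > 0, ∀ᶠ h in 𝓝 (0 : ℝ), B * (h ^ (k + 1)) ^ 2 ≤ wenoI R c z f i h := by
  obtain ⟨j, hj, hne⟩ : ∃ j ∈ Finset.Ico i (i + (R - 1) / 2),
      Even k ∨ c j + c (j + 1) ≠ 0 := by
    rcases hexc with h | h | h
    · by_cases h0 : c i + c (i + 1) = 0
      · refine ⟨i + 1, Finset.mem_Ico.2 (by omega), Or.inr fun h1 => ?_⟩
        have := hc i (i + 1 + 1) (by omega) (by omega)
        linarith
      · exact ⟨i, Finset.mem_Ico.2 (by omega), Or.inr h0⟩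
    · exact ⟨i, Finset.mem_Ico.2 (by omega), Or.inl h⟩
    · exact ⟨i, Finset.mem_Ico.2 (by omega), Or.inr (h i (by omega))⟩
  have hj' := Finset.mem_Ico.1 hj
  have hlt := hc j (j + 1) (by omega) (by omega)
  obtain ⟨B, hB, hb⟩ := weno_diff_bound z f U hU hf k hcrit hk1 (c j) (c (j + 1)) hlt
    (weno_pow_ne hlt hne)
  refine ⟨B, hB, ?_⟩
  filter_upwards [hb] with h hh
  refine hh.trans ?_
  unfold wenoI
  exact Finset.single_le_sum
    (f := fun j => ((f (z + c (j + 1) * h) - f (z + c j * h)) / (c (j + 1) - c j)) ^ 2)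
    (fun _ _ => sq_nonneg _) hj

lemma weno_x_nonneg (R : ℕ) (c : ℕ → ℝ) (z : ℝ) (f : ℝ → ℝ) (s : ℕ) (ε : ℝ) (hε : 0 < ε)
    (i : ℕ) (h : ℝ) : 0 ≤ (wenoD R c z f h) ^ s / ((wenoI R c z f i h) ^ s + ε) := by
  have h1 : 0 ≤ wenoD R c z f h := by unfold wenoD; positivity
  have h2 : 0 ≤ wenoI R c z f i h := by unfold wenoI; positivity
  positivity

lemma weno_alpha_pos (R : ℕ) (c : ℕ → ℝ) (z : ℝ) (f : ℝ → ℝ) (s : ℕ) (ε : ℝ) (hε : 0 < ε)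
    (i : ℕ) (h : ℝ) : 0 < wenoAlpha R c z f s ε i h := by
  have := weno_x_nonneg R c z f s ε hε i h
  unfold wenoAlpha
  positivity

lemma weno_omega_bound (n : ℕ) (x : ℕ → ℝ) (K : ℝ) (hx : ∀ i ≤ n, 0 ≤ x i)
    (hK : ∀ i ≤ n, x i ≤ K) (i : ℕ) (hi : i ≤ n) :
    |(1 / ((n : ℝ) + 1) * (1 + x i)) / (∑ j ∈ Finset.range (n + 1), 1 / ((n : ℝ) + 1) * (1 + x j))
      - 1 / ((n : ℝ) + 1)| ≤ K := by
  have hn : (0 : ℝ) < n + 1 := by positivity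
  have hn1 : (1 : ℝ) ≤ n + 1 := by linarith [(Nat.cast_nonneg n : (0 : ℝ) ≤ n)]
  rw [← Finset.mul_sum, Finset.sum_add_distrib]
  simp only [Finset.sum_const, Finset.card_range, nsmul_eq_mul, Nat.cast_add, Nat.cast_one, mul_one]
  have hS : 0 ≤ ∑ j ∈ Finset.range (n + 1), x j :=
    Finset.sum_nonneg fun j hj => hx j (by have := Finset.mem_range.1 hj; omega)
  have hS' : ∑ j ∈ Finset.range (n + 1), x j ≤ (n + 1) * K := by
    have := Finset.sum_le_card_nsmul (Finset.range (n + 1)) x K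
      fun j hj => hK j (by have := Finset.mem_range.1 hj; omega)
    simpa using this
  set S := ∑ j ∈ Finset.range (n + 1), x j
  set N : ℝ := (n : ℝ) + 1
  have h0 := hx i hi
  have h1 := hK i hi
  have e : (1 / N * (1 + x i)) / (1 / N * (N + S)) - 1 / N = (N * x i - S) / (N * (N + S)) := by
    have : N + S ≠ 0 := by positivity
    field_simp
    ring
  have hKn : 0 ≤ K := h0.trans h1
  rw [e, abs_div, abs_of_pos (by positivity : 0 < N * (N + S)), div_le_iff₀ (by positivity)]
  have h2 : |N * x i - S| ≤ N * K := by
    have h3 : N * x i ≤ N * K := by gcongr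
    have h4 : 0 ≤ N * x i := by positivity
    rw [abs_le]; constructor <;> linarith
  refine h2.trans ?_
  have : N ≤ N * (N + S) := by nlinarith
  nlinarith

/-- **Normalized weights in the smooth case.** Under the smooth critical-point setup, the
weights `ω_{R,i,h}` lie in `[0,1]`, sum to `1`, and satisfy
`ω_{R,i,h} = 1/(r'+1) + O(h^{2s(R-2-k)})`, uniformly in `ε > 0`. -/
theorem stmt_7 (R : ℕ) (hR : 3 ≤ R) (c : ℕ → ℝ)
    (hc : ∀ i j : ℕ, i < j → j < R → c i < c j)
    (z : ℝ) (f : ℝ → ℝ) (U : Set ℝ) (hU : U ∈ nhds z)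
    (hf : ContDiffOn ℝ (⊤ : ℕ∞) f U)
    (k : ℕ) (hk : k ≤ R - 2)
    (hcrit : ∀ j : ℕ, 1 ≤ j → j ≤ k → iteratedDeriv j f z = 0)
    (hk1 : iteratedDeriv (k + 1) f z ≠ 0)
    (hexc : 5 ≤ R ∨ Even k ∨ ∀ j : ℕ, j ≤ R - 2 → c j + c (j + 1) ≠ 0)
    (s : ℕ) (hs : 1 ≤ s) :
    (∀ ε > (0 : ℝ), ∀ h : ℝ, 0 < h → ∀ i ≤ R / 2,
        0 ≤ wenoOmega R c z f s ε i h ∧ wenoOmega R c z f s ε i h ≤ 1) ∧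
    (∀ ε > (0 : ℝ), ∀ h : ℝ, 0 < h →
        ∑ i ∈ Finset.range (R / 2 + 1), wenoOmega R c z f s ε i h = 1) ∧
    ∃ C > (0 : ℝ), ∃ h₀ > (0 : ℝ), ∀ ε > (0 : ℝ), ∀ h : ℝ, 0 < h → h < h₀ →
      ∀ i ≤ R / 2,
        |wenoOmega R c z f s ε i h - 1 / (((R / 2 : ℕ) : ℝ) + 1)|
          ≤ C * h ^ (2 * s * (R - 2 - k)) := by
  have hsum : ∀ ε > (0 : ℝ), ∀ h : ℝ,
      0 < ∑ j ∈ Finset.range (R / 2 + 1), wenoAlpha R c z f s ε j h := fun ε hε h =>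
    Finset.sum_pos (fun j _ => weno_alpha_pos R c z f s ε hε j h) ⟨0, by simp⟩
  refine ⟨fun ε hε h _ i hi => ⟨?_, ?_⟩, fun ε hε h _ => ?_, ?_⟩
  · exact div_nonneg (weno_alpha_pos R c z f s ε hε i h).le (hsum ε hε h).le
  · refine (div_le_one (hsum ε hε h)).2 ?_
    exact Finset.single_le_sum (f := fun j => wenoAlpha R c z f s ε j h)
      (fun j _ => (weno_alpha_pos R c z f s ε hε j h).le) (Finset.mem_range.2 (by omega))
  · unfold wenoOmega
    rw [← Finset.sum_div, div_self (hsum ε hε h).ne']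
  · obtain ⟨A, hA, hD⟩ := weno_D_bound R hR c hc z f U hU hf
    have hI : ∀ i : Finset.range (R / 2 + 1), ∃ B > 0, ∀ᶠ h in nhds (0 : ℝ),
        B * (h ^ (k + 1)) ^ 2 ≤ wenoI R c z f i h := fun i =>
      weno_I_bound R hR c hc z f U hU hf k hcrit hk1 hexc i
        (by have := Finset.mem_range.1 i.2; omega)
    choose B hB hI using hI
    have hev := hD.and (Filter.eventually_all.2 hI)
    obtain ⟨h₀, hh₀, hball⟩ := Metric.eventually_nhds_iff.1 hev
    have hterm : ∀ i, 0 < (A / B i) ^ s := fun i => by have := hB i; positivity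
    refine ⟨∑ i, (A / B i) ^ s, Finset.sum_pos (fun i _ => hterm i)
      ⟨⟨0, by simp⟩, Finset.mem_univ _⟩, h₀, hh₀, fun ε hε h hh hlt i hi => ?_⟩
    obtain ⟨hd, hi'⟩ := hball (y := h) (by simpa [abs_of_pos hh] using hlt)
    refine weno_omega_bound (R / 2)
      (fun i => (wenoD R c z f h) ^ s / ((wenoI R c z f i h) ^ s + ε)) _
      (fun i _ => weno_x_nonneg R c z f s ε hε i h) (fun j hj => ?_) i hi
    let j' : Finset.range (R / 2 + 1) := ⟨j, Finset.mem_range.2 (by omega)⟩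
    have hj1 := hi' j'
    have hBj := hB j'
    have hd0 : 0 ≤ wenoD R c z f h := by unfold wenoD; positivity
    have e1 : (h ^ (R - 1)) ^ 2 = (h ^ (k + 1)) ^ 2 * (h ^ (R - 2 - k)) ^ 2 := by
      rw [← mul_pow, ← pow_add]; congr 2; omega
    calc (wenoD R c z f h) ^ s / ((wenoI R c z f j h) ^ s + ε)
        ≤ (A * (h ^ (R - 1)) ^ 2) ^ s / (B j' * (h ^ (k + 1)) ^ 2) ^ s := by
          apply div_le_div₀ (by positivity) (pow_le_pow_left₀ hd0 hd s) (by positivity)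
          have : (B j' * (h ^ (k + 1)) ^ 2) ^ s ≤ (wenoI R c z f j h) ^ s :=
            pow_le_pow_left₀ (by positivity) hj1 s
          linarith
      _ = (A / B j') ^ s * h ^ (2 * s * (R - 2 - k)) := by
          have e2 : h ^ (2 * s * (R - 2 - k)) = ((h ^ (R - 2 - k)) ^ 2) ^ s := by
            rw [← pow_mul, ← pow_mul]; congr 1; ring
          rw [e2, ← div_pow, ← mul_pow, e1]
          congr 1
          field_simp
      _ ≤ _ := by
          gcongr
          exact Finset.single_le_sum (f := fun i => (A / B i) ^ s)
            (fun i _ => (hterm i).le) (Finset.mem_univ j')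
end

section
/- Assume the WENO weight setup in the jump setting, and additionally assume κ := Σ_{i=l+1}^{R−1} 1/Π_{j≠i}(c_i − c_j) ≠ 0 and that at least one substencil is clean. Let i be an index whose substencil crosses the jump (i.e. i ≤ l ≤ i+r−1). Then there exist C > 0 and h₀ > 0 such that for every ε with 0 < ε ≤ 1 and every 0 < h < h₀: ω_{R,i,h} ≤ C·(h^{2s} + ε). -/
open Filter Topology Asymptotics in
theorem aux_big (z c0 a : ℝ) (f g : ℝ → ℝ) (hg : DifferentiableAt ℝ g z) (ha : a = g z)
    (h : ∀ h > 0, f (z + c0 * h) = g (z + c0 * h)) :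
    (fun h : ℝ => f (z + c0 * h) - a) =O[𝓝[>] 0] (fun h : ℝ => h) := by
  subst ha
  have ht : Tendsto (fun h : ℝ => z + c0 * h) (𝓝[>] 0) (𝓝 z) := by
    have : Continuous (fun h : ℝ => z + c0 * h) := by fun_prop
    have h2 := this.tendsto 0
    simp only [mul_zero, add_zero] at h2
    exact h2.mono_left nhdsWithin_le_nhds
  have h1 := hg.isBigO_sub.comp_tendsto ht
  have h2 : (fun h : ℝ => f (z + c0 * h) - g z) =ᶠ[𝓝[>] 0]
      ((fun x => g x - g z) ∘ fun h : ℝ => z + c0 * h) := by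
    filter_upwards [self_mem_nhdsWithin] with x hx
    simp [h x hx]
  refine h2.trans_isBigO (h1.trans ?_)
  have h3 : ((fun x => x - z) ∘ fun h : ℝ => z + c0 * h) = fun h => c0 * h := by
    ext; simp
  rw [h3]
  exact (isBigO_refl _ _).const_mul_left c0

theorem aux_alg (s n : ℕ) (D Ii Ik a b M B h ε : ℝ) (A : ℕ → ℝ) (i k : ℕ) (p : ℝ)
    (hp : 0 < p) (hk : k ∈ Finset.range n)
    (hA : ∀ j, 0 ≤ A j) (ha : 0 < a) (hb : 0 < b) (hB : 0 < B) (hε : 0 < ε)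
    (hi : A i = p * (1 + D ^ s / (Ii ^ s + ε))) (hkk : A k = p * (1 + D ^ s / (Ik ^ s + ε)))
    (haI : a ≤ Ii) (hbD : b ≤ D) (hDM : D ≤ M) (hI0 : 0 ≤ Ik) (hIB : Ik ≤ B * h ^ 2) :
    A i / ∑ j ∈ Finset.range n, A j ≤
      ((1 + M ^ s / a ^ s) / b ^ s * (B ^ s + 1)) * (h ^ (2 * s) + ε) := by
  have hD : 0 < D := hb.trans_le hbD
  have hM : 0 < M := hD.trans_le hDM
  have hIi : 0 < Ii := ha.trans_le haI
  have hh : 0 ≤ h ^ (2 * s) := by rw [pow_mul]; positivity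
  have e1 : A i ≤ p * (1 + M ^ s / a ^ s) := by
    rw [hi]
    have h1 : D ^ s ≤ M ^ s := pow_le_pow_left₀ hD.le hDM s
    have h2 : a ^ s ≤ Ii ^ s + ε := (pow_le_pow_left₀ ha.le haI s).trans (by linarith)
    have : D ^ s / (Ii ^ s + ε) ≤ M ^ s / a ^ s :=
      div_le_div₀ (by positivity) h1 (by positivity) h2
    gcongr
  have e3 : Ik ^ s + ε ≤ (B ^ s + 1) * (h ^ (2 * s) + ε) := by
    have := pow_le_pow_left₀ hI0 hIB s
    rw [mul_pow, ← pow_mul] at this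
    have : 0 < B ^ s := by positivity
    nlinarith [mul_pos this hε]
  have e4 : 0 < Ik ^ s + ε := by positivity
  have e2 : p * (b ^ s / ((B ^ s + 1) * (h ^ (2 * s) + ε))) ≤ ∑ j ∈ Finset.range n, A j := by
    refine le_trans ?_ (Finset.single_le_sum (fun j _ => hA j) hk)
    rw [hkk]
    have h1 : b ^ s ≤ D ^ s := pow_le_pow_left₀ hb.le hbD s
    have := div_le_div₀ (by positivity) h1 e4 e3
    gcongr
    linarith
  have e5 : 0 < h ^ (2 * s) + ε := by positivity
  calc _ ≤ (p * (1 + M ^ s / a ^ s)) / (p * (b ^ s / ((B ^ s + 1) * (h ^ (2 * s) + ε)))) :=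
        div_le_div₀ (by positivity) e1 (by positivity) e2
    _ = _ := by field_simp

theorem aux_zero (R : ℕ) (hR : 3 ≤ R) (c : ℕ → ℝ)
    (hc : ∀ i j : ℕ, i < j → j < R → c i < c j) :
    ∑ i ∈ Finset.range R, 1 / ∏ j ∈ (Finset.range R).erase i, (c i - c j) = 0 := by
  have hinj : Set.InjOn c (Finset.range R : Finset ℕ) := by
    intro a ha b hb hab
    simp only [Finset.coe_range, Set.mem_Iio] at ha hb
    rcases lt_trichotomy a b with h | h | h
    · exact absurd hab (hc a b h hb).ne
    · exact h
    · exact absurd hab (hc b a h ha).ne'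
  have := Lagrange.coeff_eq_sum (P := 1) hinj (by
    rw [Polynomial.degree_one, Finset.card_range]; exact_mod_cast (by omega : 0 < R))
  simp only [Polynomial.eval_one, Finset.card_range] at this
  rw [← this, Polynomial.coeff_one, if_neg (by omega)]

open Filter Topology Asymptotics

/-- **Weights of crossed substencils are small at a jump.** In the jump setting, if
`κ = Σ_{i=l+1}^{R-1} 1/Π_{j≠i}(cᵢ-cⱼ) ≠ 0`, at least one substencil is clean, and the `i`-th
substencil crosses the jump, then `ω_{R,i,h} ≤ C (h^{2s} + ε)` for small `h` and `0 < ε ≤ 1`. -/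
theorem stmt_9 (R : ℕ) (hR : 3 ≤ R) (c : ℕ → ℝ)
    (hc : ∀ i j : ℕ, i < j → j < R → c i < c j)
    (z : ℝ) (fL fR f : ℝ → ℝ) (U : Set ℝ) (hU : U ∈ nhds z)
    (hfL : ContDiffOn ℝ (⊤ : ℕ∞) fL U) (hfR : ContDiffOn ℝ (⊤ : ℕ∞) fR U)
    (hjump : fL z ≠ fR z)
    (hf : ∀ x : ℝ, f x = if x < z then fL x else fR x)
    (l : ℕ) (hl : l + 1 < R) (hcl : c l < 0) (hcl' : 0 ≤ c (l + 1))
    (hκ : ∑ i ∈ Finset.Ico (l + 1) R,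
        1 / ∏ j ∈ (Finset.range R).erase i, (c i - c j) ≠ 0)
    (hclean : ∃ i ≤ R / 2, ¬(i ≤ l ∧ l ≤ i + (R - 1) / 2 - 1))
    (s : ℕ) (hs : 1 ≤ s)
    (i : ℕ) (hi : i ≤ R / 2) (hcross : i ≤ l ∧ l ≤ i + (R - 1) / 2 - 1) :
    ∃ C > (0 : ℝ), ∃ h₀ > (0 : ℝ), ∀ ε : ℝ, 0 < ε → ε ≤ 1 → ∀ h : ℝ, 0 < h → h < h₀ →
      wenoOmega R c z f s ε i h ≤ C * (h ^ (2 * s) + ε) := by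
  obtain ⟨k, hk, hkc⟩ := hclean
  have hz := mem_of_mem_nhds hU
  have hdL : DifferentiableAt ℝ fL z := (hfL.contDiffAt hU).differentiableAt (by simp)
  have hdR : DifferentiableAt ℝ fR z := (hfR.contDiffAt hU).differentiableAt (by simp)
  set g : ℕ → ℝ := fun j => if j ≤ l then fL z else fR z with hg
  have hbig : ∀ j < R, (fun h : ℝ => f (z + c j * h) - g j) =O[𝓝[>] 0] (fun h : ℝ => h) := by
    intro j hj
    by_cases hjl : j ≤ l
    · refine aux_big z (c j) (g j) f fL hdL (by simp [hg, hjl]) ?_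
      intro h hh
      have : c j < 0 := by
        rcases hjl.lt_or_eq with h1 | h1
        · exact (hc j l h1 (by omega)).trans hcl
        · rwa [h1]
      rw [hf, if_pos]
      nlinarith
    · refine aux_big z (c j) (g j) f fR hdR (by simp [hg, hjl]) ?_
      intro h hh
      have : 0 ≤ c j := by
        rcases (show l + 1 ≤ j by omega).lt_or_eq with h1 | h1
        · exact hcl'.trans (hc _ j h1 hj).le
        · rwa [← h1]
      rw [hf, if_neg]
      nlinarith
  have hid : Tendsto (fun h : ℝ => h) (𝓝[>] 0) (𝓝 0) := tendsto_id.mono_left nhdsWithin_le_nhds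
  have hten : ∀ j < R, Tendsto (fun h : ℝ => f (z + c j * h)) (𝓝[>] 0) (𝓝 (g j)) := by
    intro j hj
    have := ((hbig j hj).trans_tendsto hid).add_const (g j)
    simpa using this
  -- limit of D
  have hD : Tendsto (fun h => wenoD R c z f h) (𝓝[>] 0)
      (𝓝 ((((R - 1).factorial : ℝ) *
      ∑ i ∈ Finset.range R, g i / ∏ j ∈ (Finset.range R).erase i, (c i - c j)) ^ 2)) := by
    unfold wenoD
    refine ((tendsto_finsetSum _ fun j hj => ?_).const_mul _).pow 2
    exact (hten j (Finset.mem_range.mp hj)).div_const _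
  have hI : Tendsto (fun h => wenoI R c z f i h) (𝓝[>] 0)
      (𝓝 (∑ j ∈ Finset.Ico i (i + (R - 1) / 2), ((g (j + 1) - g j) / (c (j + 1) - c j)) ^ 2)) := by
    unfold wenoI
    refine tendsto_finsetSum _ fun j hj => ?_
    rw [Finset.mem_Ico] at hj
    exact (((hten (j+1) (by omega)).sub (hten j (by omega))).div_const _).pow 2
  have hIk : (fun h => wenoI R c z f k h) =O[𝓝[>] 0] (fun h : ℝ => h ^ 2) := by
    unfold wenoI
    refine IsBigO.fun_sum fun j hj => ?_
    rw [Finset.mem_Ico] at hj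
    refine IsBigO.pow ?_ 2
    have h1 := (hbig (j+1) (by omega)).sub (hbig j (by omega))
    have h2 : g (j + 1) = g j := by
      simp only [hg]
      by_cases hj1 : j + 1 ≤ l
      · rw [if_pos hj1, if_pos (by omega)]
      · rw [if_neg hj1, if_neg (by omega)]
    simp only [h2, sub_sub_sub_cancel_right] at h1
    simp only [div_eq_inv_mul]
    exact h1.const_mul_left _
  have hI0 : 0 < ∑ j ∈ Finset.Ico i (i + (R - 1) / 2),
      ((g (j + 1) - g j) / (c (j + 1) - c j)) ^ 2 := by
    refine Finset.sum_pos' (fun _ _ => sq_nonneg _) ⟨l, Finset.mem_Ico.mpr (by omega), ?_⟩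
    have h1 : g (l + 1) - g l ≠ 0 := by
      simp only [hg]
      rw [if_neg (by omega), if_pos le_rfl]
      exact sub_ne_zero.mpr hjump.symm
    have h2 : c (l + 1) - c l ≠ 0 := by linarith [hc l (l+1) (by omega) hl]
    positivity
  have hD0 : 0 < (((R - 1).factorial : ℝ) *
      ∑ i ∈ Finset.range R, g i / ∏ j ∈ (Finset.range R).erase i, (c i - c j)) ^ 2 := by
    have h0 := aux_zero R hR c hc
    have h1 : ∑ i ∈ Finset.range R, g i / ∏ j ∈ (Finset.range R).erase i, (c i - c j)
        = (fR z - fL z) * ∑ i ∈ Finset.Ico (l + 1) R,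
        1 / ∏ j ∈ (Finset.range R).erase i, (c i - c j) := by
      rw [← Finset.sum_range_add_sum_Ico _ (show l + 1 ≤ R by omega)] at h0 ⊢
      have e1 : ∑ i ∈ Finset.range (l + 1), g i / ∏ j ∈ (Finset.range R).erase i, (c i - c j)
          = fL z * ∑ i ∈ Finset.range (l + 1), 1 / ∏ j ∈ (Finset.range R).erase i, (c i - c j) := by
        rw [Finset.mul_sum]
        refine Finset.sum_congr rfl fun j hj => ?_
        rw [Finset.mem_range] at hj
        simp only [hg]
        rw [if_pos (by omega), mul_one_div]
      have e2 : ∑ i ∈ Finset.Ico (l + 1) R, g i / ∏ j ∈ (Finset.range R).erase i, (c i - c j)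
          = fR z * ∑ i ∈ Finset.Ico (l + 1) R, 1 / ∏ j ∈ (Finset.range R).erase i, (c i - c j) := by
        rw [Finset.mul_sum]
        refine Finset.sum_congr rfl fun j hj => ?_
        rw [Finset.mem_Ico] at hj
        simp only [hg]
        rw [if_neg (by omega), mul_one_div]
      rw [e1, e2]
      linear_combination fL z * h0
    rw [h1]
    have h2 : fR z - fL z ≠ 0 := sub_ne_zero.mpr hjump.symm
    have h3 : ((R - 1).factorial : ℝ) ≠ 0 := by positivity
    have := mul_ne_zero h3 (mul_ne_zero h2 hκ)
    positivity
  generalize (((R - 1).factorial : ℝ) *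
      ∑ i ∈ Finset.range R, g i / ∏ j ∈ (Finset.range R).erase i, (c i - c j)) ^ 2 = D0 at hD hD0
  generalize ∑ j ∈ Finset.Ico i (i + (R - 1) / 2),
      ((g (j + 1) - g j) / (c (j + 1) - c j)) ^ 2 = I0 at hI hI0
  obtain ⟨B, hB, hIB⟩ := hIk.exists_pos
  rw [IsBigOWith] at hIB
  have hev : ∀ᶠ h in 𝓝[>] (0 : ℝ), I0 / 2 ≤ wenoI R c z f i h ∧ D0 / 2 ≤ wenoD R c z f h ∧
      wenoD R c z f h ≤ D0 + 1 ∧ wenoI R c z f k h ≤ B * h ^ 2 := by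
    filter_upwards [hI.eventually (lt_mem_nhds (half_lt_self hI0)),
      hD.eventually (lt_mem_nhds (half_lt_self hD0)),
      hD.eventually (gt_mem_nhds (lt_add_one D0)), hIB] with h h1 h2 h3 h4
    refine ⟨h1.le, h2.le, h3.le, ?_⟩
    rw [Real.norm_eq_abs, Real.norm_eq_abs, abs_of_nonneg (sq_nonneg h)] at h4
    exact (le_abs_self _).trans h4
  obtain ⟨h₀, hh₀, hsub⟩ := mem_nhdsGT_iff_exists_Ioo_subset.mp hev
  refine ⟨(1 + (D0 + 1) ^ s / (I0 / 2) ^ s) / (D0 / 2) ^ s * (B ^ s + 1), by positivity,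
    h₀, hh₀, ?_⟩
  intro ε hε _ h hh hhh
  obtain ⟨h1, h2, h3, h4⟩ := hsub ⟨hh, hhh⟩
  have hInn : ∀ j, 0 ≤ wenoI R c z f j h := fun j => Finset.sum_nonneg fun _ _ => sq_nonneg _
  have hDnn : 0 ≤ wenoD R c z f h := sq_nonneg _
  refine aux_alg s (R / 2 + 1) _ _ _ (I0 / 2) (D0 / 2) (D0 + 1) B h ε
    (fun j => wenoAlpha R c z f s ε j h) i k (1 / (((R / 2 : ℕ) : ℝ) + 1)) (by positivity)
    (Finset.mem_range.mpr (by omega)) ?_ (by positivity) (by positivity) hB hε rfl rfl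
    h1 h2 h3 (hInn k) h4
  intro j
  have := hInn j
  simp only [wenoAlpha]
  positivity
end

section
/- Let R ≥ 1 be an integer, c_0 < c_1 < ⋯ < c_{R−1}, z and c* real numbers, and let f be of class C^R on a neighborhood of z. Then the Lagrange reconstruction of f from the nodes z + c_i·h evaluated at z + c*·h has error O(h^R): there exist C > 0 and h₀ > 0 such that for all 0 < h < h₀, |Σ_{i=0}^{R−1} [Π_{j=0, j≠i}^{R−1} (c* − c_j)/(c_i − c_j)]·f(z + c_i·h) − f(z + c*·h)| ≤ C·h^R. -/
theorem lagr_pow_aux (R : ℕ) (c : ℕ → ℝ)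
    (hc : ∀ i j : ℕ, i < j → j < R → c i < c j) (t : ℝ) (k : ℕ) (hk : k < R) :
    ∑ i ∈ Finset.range R,
      (∏ j ∈ (Finset.range R).erase i, (t - c j) / (c i - c j)) * c i ^ k = t ^ k := by
  have hinj : Set.InjOn c (Finset.range R : Set ℕ) := by
    intro i hi j hj hij
    simp only [Finset.coe_range, Set.mem_Iio] at hi hj
    rcases lt_trichotomy i j with h | h | h
    · exact absurd hij (hc i j h hj).ne
    · exact h
    · exact absurd hij (hc j i h hi).ne'
  have h := Lagrange.eq_interpolate (f := (Polynomial.X ^ k : Polynomial ℝ)) hinj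
    (by rw [Polynomial.degree_X_pow, Finset.card_range]; exact_mod_cast hk)
  have h2 := congrArg (Polynomial.eval t) h
  rw [Lagrange.interpolate_apply, Polynomial.eval_finsetSum] at h2
  simp only [Polynomial.eval_pow, Polynomial.eval_X, Polynomial.eval_mul, Polynomial.eval_C,
    Lagrange.basis, Polynomial.eval_prod, Lagrange.basisDivisor, Polynomial.eval_sub] at h2
  rw [h2]
  refine Finset.sum_congr rfl fun i _ => ?_
  rw [mul_comm]
  congr 1
  refine Finset.prod_congr rfl fun j _ => ?_
  rw [div_eq_inv_mul]

open Asymptotics Filter Topology in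
theorem taylor_aux (R : ℕ) (z : ℝ) (f : ℝ → ℝ) (U : Set ℝ) (hU : U ∈ nhds z)
    (hf : ContDiffOn ℝ (R : ℕ) f U) :
    ∃ a : ℕ → ℝ, (fun x => f x - ∑ k ∈ Finset.range R, a k * (x - z) ^ k)
      =O[𝓝 z] fun x => (x - z) ^ R := by
  obtain ⟨ε, hε, hs⟩ := Metric.mem_nhds_iff.1 hU
  have h := taylor_isLittleO (convex_ball z ε) (Metric.mem_ball_self hε) (hf.mono hs)
  rw [(Metric.isOpen_ball.nhdsWithin_eq (Metric.mem_ball_self hε))] at h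
  refine ⟨fun k => ((k.factorial : ℝ)⁻¹ * iteratedDerivWithin k f (Metric.ball z ε) z), ?_⟩
  have h2 : (fun x => ((R.factorial : ℝ)⁻¹ * iteratedDerivWithin R f (Metric.ball z ε) z)
      * (x - z) ^ R) =O[𝓝 z] fun x => (x - z) ^ R :=
    (isBigO_refl _ _).const_mul_left _
  refine (h.isBigO.add h2).congr_left fun x => ?_
  rw [taylor_within_apply, Finset.sum_range_succ]
  have : ∀ k, ((k.factorial : ℝ)⁻¹ * (x - z) ^ k) • iteratedDerivWithin k f (Metric.ball z ε) z
    = ((k.factorial : ℝ)⁻¹ * iteratedDerivWithin k f (Metric.ball z ε) z) * (x - z) ^ k := by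
    intro k; rw [smul_eq_mul]; ring
  simp only [this]
  ring

/-- **Lagrange reconstruction error.** For `f` of class `C^R` near `z`, the Lagrange
interpolation of `f` at the nodes `z + cᵢ h` evaluated at `z + c* h` has error `O(h^R)`. -/
theorem stmt_11 (R : ℕ) (hR : 1 ≤ R) (c : ℕ → ℝ)
    (hc : ∀ i j : ℕ, i < j → j < R → c i < c j)
    (z cstar : ℝ) (f : ℝ → ℝ) (U : Set ℝ) (hU : U ∈ nhds z)
    (hf : ContDiffOn ℝ (R : ℕ) f U) :
    ∃ C > (0 : ℝ), ∃ h₀ > (0 : ℝ), ∀ h : ℝ, 0 < h → h < h₀ →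
      |(∑ i ∈ Finset.range R,
          (∏ j ∈ (Finset.range R).erase i, (cstar - c j) / (c i - c j)) * f (z + c i * h))
          - f (z + cstar * h)| ≤ C * h ^ R := by
  obtain ⟨a, ha⟩ := taylor_aux R z f U hU hf
  have key : ∀ d : ℝ, (fun h : ℝ => f (z + d * h) - ∑ k ∈ Finset.range R, a k * (d * h) ^ k)
      =O[nhds 0] fun h : ℝ => h ^ R := by
    intro d
    have ht : Filter.Tendsto (fun h : ℝ => z + d * h) (nhds 0) (nhds z) := by
      have : Continuous fun h : ℝ => z + d * h := by fun_prop
      simpa using this.tendsto 0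
    have h1 := ha.comp_tendsto ht
    have h2 : (fun h : ℝ => d ^ R * h ^ R) =O[nhds 0] fun h : ℝ => h ^ R :=
      (Asymptotics.isBigO_refl _ _).const_mul_left _
    refine (h1.congr (fun h => ?_) (fun h => ?_)).trans h2
    · simp
    · simp [mul_pow]
  have hsum := (Asymptotics.IsBigO.sum (s := Finset.range R) fun i _ =>
    (key (c i)).const_mul_left
      (∏ j ∈ (Finset.range R).erase i, (cstar - c j) / (c i - c j))).sub (key cstar)
  obtain ⟨C, hC, hb⟩ := hsum.exists_pos
  obtain ⟨ε, hε, hball⟩ := Metric.eventually_nhds_iff.1 hb.bound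
  refine ⟨C, hC, ε, hε, fun h h0 h1 => ?_⟩
  have := hball (y := h) (by rw [Real.dist_eq, sub_zero, abs_of_pos h0]; exact h1)
  rw [Real.norm_eq_abs, Real.norm_eq_abs, abs_of_pos (pow_pos h0 R)] at this
  refine le_of_eq_of_le (congrArg _ ?_) this
  have hp : ∑ i ∈ Finset.range R, (∏ j ∈ (Finset.range R).erase i, (cstar - c j) / (c i - c j)) *
      ∑ k ∈ Finset.range R, a k * (c i * h) ^ k
      = ∑ k ∈ Finset.range R, a k * (cstar * h) ^ k := by
    simp only [Finset.mul_sum]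
    rw [Finset.sum_comm]
    refine Finset.sum_congr rfl fun k hk => ?_
    rw [mul_pow, ← lagr_pow_aux R c hc cstar k (Finset.mem_range.1 hk), Finset.sum_mul,
      Finset.mul_sum]
    refine Finset.sum_congr rfl fun i _ => ?_
    ring
  simp only [Finset.sum_apply, mul_sub, Finset.sum_sub_distrib]
  rw [hp]
  ring
end

section
/- Assume the WENO weight setup in the jump setting. If the substencil with index i crosses the jump (i.e. i ≤ l ≤ i+r−1), then I_{R,i,h} converges, as h → 0⁺, to the strictly positive limit ((f_R(z) − f_L(z))/(c_{l+1} − c_l))²; if instead the substencil with index i is clean, then there exist C > 0 and h₀ > 0 such that I_{R,i,h} ≤ C·h² for all 0 < h < h₀. -/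
open Filter Topology Asymptotics in
theorem weno_bigO (g : ℝ → ℝ) (z a : ℝ) (hg : DifferentiableAt ℝ g z) :
    (fun h : ℝ => g (z + a * h) - g z) =O[𝓝[>] 0] (fun h : ℝ => h) := by
  have h1 : DifferentiableAt ℝ (fun h : ℝ => g (z + a * h)) 0 := by
    have h2 : DifferentiableAt ℝ (fun h : ℝ => z + a * h) 0 := by fun_prop
    exact DifferentiableAt.comp (g := g) (0 : ℝ) (by simpa using hg) h2
  have h3 := h1.isBigO_sub
  simp only [mul_zero, add_zero, sub_zero] at h3
  exact h3.mono nhdsWithin_le_nhds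

/-- **Smoothness indicators in the jump setting.** If the `i`-th substencil crosses the jump,
then `I_{R,i,h}` converges as `h → 0⁺` to the strictly positive limit
`((f_R(z) - f_L(z))/(c_{l+1} - c_l))²`; if the substencil is clean, `I_{R,i,h} = O(h²)`. -/
theorem stmt_14 (R : ℕ) (hR : 3 ≤ R) (c : ℕ → ℝ)
    (hc : ∀ i j : ℕ, i < j → j < R → c i < c j)
    (z : ℝ) (fL fR f : ℝ → ℝ) (U : Set ℝ) (hU : U ∈ nhds z)
    (hfL : ContDiffOn ℝ (⊤ : ℕ∞) fL U) (hfR : ContDiffOn ℝ (⊤ : ℕ∞) fR U)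
    (hjump : fL z ≠ fR z)
    (hf : ∀ x : ℝ, f x = if x < z then fL x else fR x)
    (l : ℕ) (hl : l + 1 < R) (hcl : c l < 0) (hcl' : 0 ≤ c (l + 1))
    (i : ℕ) (hi : i ≤ R / 2) :
    ((i ≤ l ∧ l ≤ i + (R - 1) / 2 - 1) →
      0 < ((fR z - fL z) / (c (l + 1) - c l)) ^ 2 ∧
        Filter.Tendsto (fun h : ℝ => wenoI R c z f i h)
          (nhdsWithin 0 (Set.Ioi 0))
          (nhds (((fR z - fL z) / (c (l + 1) - c l)) ^ 2))) ∧
    (¬(i ≤ l ∧ l ≤ i + (R - 1) / 2 - 1) →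
      ∃ C > (0 : ℝ), ∃ h₀ > (0 : ℝ), ∀ h : ℝ, 0 < h → h < h₀ →
        wenoI R c z f i h ≤ C * h ^ 2) := by
  have hdL : DifferentiableAt ℝ fL z := (hfL.contDiffAt hU).differentiableAt (by simp)
  have hdR : DifferentiableAt ℝ fR z := (hfR.contDiffAt hU).differentiableAt (by simp)
  have hneg : ∀ j, j ≤ l → c j < 0 := by
    intro j hj
    rcases hj.lt_or_eq with h | h
    · exact (hc j l h (by omega)).trans hcl
    · rw [h]; exact hcl
  have hpos : ∀ j, l < j → j < R → 0 ≤ c j := by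
    intro j hj hjR
    rcases (Nat.succ_le_of_lt hj).lt_or_eq with h | h
    · exact hcl'.trans (hc (l + 1) j h hjR).le
    · rw [← h]; exact hcl'
  have hO : ∀ j, j < R → (fun h : ℝ => f (z + c j * h) - (if j ≤ l then fL z else fR z))
      =O[nhdsWithin 0 (Set.Ioi 0)] (fun h : ℝ => h) := by
    intro j hjR
    by_cases hj : j ≤ l
    · refine (weno_bigO fL z (c j) hdL).congr' ?_ Filter.EventuallyEq.rfl
      filter_upwards [self_mem_nhdsWithin] with h hh
      have : c j * h < 0 := mul_neg_of_neg_of_pos (hneg j hj) hh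
      rw [hf, if_pos (by linarith), if_pos hj]
    · refine (weno_bigO fR z (c j) hdR).congr' ?_ Filter.EventuallyEq.rfl
      filter_upwards [self_mem_nhdsWithin] with h hh
      have : 0 ≤ c j * h := mul_nonneg (hpos j (by omega) hjR) (le_of_lt hh)
      rw [hf, if_neg (by linarith), if_neg hj]
  have hid : Filter.Tendsto (fun h : ℝ => h) (nhdsWithin 0 (Set.Ioi 0)) (nhds 0) :=
    nhdsWithin_le_nhds
  have hT : ∀ j, j < R → Filter.Tendsto (fun h : ℝ => f (z + c j * h))
      (nhdsWithin 0 (Set.Ioi 0)) (nhds (if j ≤ l then fL z else fR z)) := by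
    intro j hjR
    have := ((hO j hjR).trans_tendsto hid).add_const (if j ≤ l then fL z else fR z)
    simpa using this
  constructor
  · rintro ⟨h1, h2⟩
    constructor
    · have e1 : fR z - fL z ≠ 0 := sub_ne_zero.mpr hjump.symm
      have e2 : c (l + 1) - c l ≠ 0 := by linarith
      positivity
    · have key : Filter.Tendsto (fun h : ℝ => wenoI R c z f i h) (nhdsWithin 0 (Set.Ioi 0))
          (nhds (∑ j ∈ Finset.Ico i (i + (R - 1) / 2),
            (((if j + 1 ≤ l then fL z else fR z) - (if j ≤ l then fL z else fR z))
              / (c (j + 1) - c j)) ^ 2)) := by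
        unfold wenoI
        refine tendsto_finsetSum _ fun j hj => ?_
        rw [Finset.mem_Ico] at hj
        exact (((hT (j + 1) (by omega)).sub (hT j (by omega))).div_const _).pow 2
      rw [Finset.sum_eq_single l] at key
      · simpa using key
      · intro j _ hjl
        by_cases hj : j ≤ l
        · rw [if_pos hj, if_pos (by omega)]; simp
        · rw [if_neg hj, if_neg (by omega)]; simp
      · intro hn
        exact absurd (Finset.mem_Ico.mpr ⟨h1, by omega⟩) hn
  · intro hclean
    have key : (fun h : ℝ => wenoI R c z f i h) =O[nhdsWithin 0 (Set.Ioi 0)]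
        (fun h : ℝ => h ^ 2) := by
      unfold wenoI
      refine Asymptotics.IsBigO.fun_sum fun j hj => ?_
      rw [Finset.mem_Ico] at hj
      have hjl : j ≠ l := by omega
      refine Asymptotics.IsBigO.pow ?_ 2
      have h3 := ((hO (j + 1) (by omega)).sub (hO j (by omega))).const_mul_left
        (c (j + 1) - c j)⁻¹
      refine h3.congr_left fun h => ?_
      by_cases hj' : j ≤ l
      · rw [if_pos hj', if_pos (by omega)]; ring
      · rw [if_neg hj', if_neg (by omega)]; ring
    obtain ⟨C, hC, hb⟩ := key.exists_pos
    obtain ⟨h₀, hh₀, hs⟩ := mem_nhdsGT_iff_exists_Ioo_subset.mp hb.bound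
    refine ⟨C, hC, h₀, hh₀, fun h hp hlt => ?_⟩
    have h4 : ‖wenoI R c z f i h‖ ≤ C * ‖h ^ 2‖ := hs ⟨hp, hlt⟩
    rw [Real.norm_of_nonneg (sq_nonneg h)] at h4
    exact (Real.le_norm_self _).trans h4
end

section
/- Assume the jump setting for the full stencil: f_L and f_R are C^∞ (continuity suffices) on a neighborhood of z with f_L(z) ≠ f_R(z), f(x) = f_L(x) for x < z and f(x) = f_R(x) for x ≥ z, and c_l < 0 ≤ c_{l+1} for some index l with 0 ≤ l ≤ R−2. Then lim_{h→0⁺} Σ_{i=0}^{R−1} f(z + c_i·h)/Π_{j≠i}(c_i − c_j) = (f_R(z) − f_L(z))·κ, where κ = Σ_{i=l+1}^{R−1} 1/Π_{j≠i}(c_i − c_j); consequently, if κ ≠ 0 then d_{R,h} = ((R−1)!·Σ_{i=0}^{R−1} f(z + c_i·h)/Π_{j≠i}(c_i − c_j))² converges to the strictly positive limit ((R−1)!·(f_R(z) − f_L(z))·κ)². -/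
/-- **Undivided difference at a jump.** If the full stencil crosses a jump of `f` at `z`
(`c_l < 0 ≤ c_{l+1}`), then `Σᵢ f(z + cᵢ h)/Πⱼ≠ᵢ(cᵢ-cⱼ) → (f_R(z) - f_L(z))·κ` as `h → 0⁺`,
where `κ = Σ_{i=l+1}^{R-1} 1/Πⱼ≠ᵢ(cᵢ-cⱼ)`; hence if `κ ≠ 0`, the squared undivided difference
`d_{R,h}` converges to the strictly positive limit `((R-1)!·(f_R(z)-f_L(z))·κ)²`. -/
theorem stmt_15 (R : ℕ) (hR : 2 ≤ R) (c : ℕ → ℝ)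
    (hc : ∀ i j : ℕ, i < j → j < R → c i < c j)
    (z : ℝ) (fL fR f : ℝ → ℝ) (U : Set ℝ) (hU : U ∈ nhds z)
    (hfL : ContinuousOn fL U) (hfR : ContinuousOn fR U)
    (hjump : fL z ≠ fR z)
    (hf : ∀ x : ℝ, f x = if x < z then fL x else fR x)
    (l : ℕ) (hl : l ≤ R - 2) (hcl : c l < 0) (hcl' : 0 ≤ c (l + 1))
    (κ : ℝ)
    (hκdef : κ = ∑ i ∈ Finset.Ico (l + 1) R,
        1 / ∏ j ∈ (Finset.range R).erase i, (c i - c j)) :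
    Filter.Tendsto
      (fun h : ℝ =>
        ∑ i ∈ Finset.range R,
          f (z + c i * h) / ∏ j ∈ (Finset.range R).erase i, (c i - c j))
      (nhdsWithin 0 (Set.Ioi 0)) (nhds ((fR z - fL z) * κ)) ∧
    (κ ≠ 0 →
      0 < (((R - 1).factorial : ℝ) * (fR z - fL z) * κ) ^ 2 ∧
        Filter.Tendsto
          (fun h : ℝ =>
            (((R - 1).factorial : ℝ) *
                ∑ i ∈ Finset.range R,
                  f (z + c i * h) / ∏ j ∈ (Finset.range R).erase i, (c i - c j)) ^ 2)
          (nhdsWithin 0 (Set.Ioi 0))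
          (nhds ((((R - 1).factorial : ℝ) * (fR z - fL z) * κ) ^ 2))) := by
  have hinj : Set.InjOn c (Finset.range R : Finset ℕ) := by
    intro i hi j hj hij
    simp only [Finset.coe_range, Set.mem_Iio] at hi hj
    rcases lt_trichotomy i j with h | h | h
    · have := hc i j h hj
      linarith
    · exact h
    · have := hc j i h hi
      linarith
  have hzero : ∑ i ∈ Finset.range R, 1 / ∏ j ∈ (Finset.range R).erase i, (c i - c j) = 0 := by
    have h1 : ((1 : Polynomial ℝ)).degree < ((Finset.range R).card : ℕ) := by
      rw [Polynomial.degree_one, Finset.card_range]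
      exact_mod_cast (by omega : 0 < R)
    have h := Lagrange.coeff_eq_sum (s := Finset.range R) (v := c) hinj h1
    rw [Finset.card_range, Polynomial.coeff_one, if_neg (by omega)] at h
    simpa using h.symm
  have hlR : l + 1 ≤ R := by omega
  have hsplit : ∀ g : ℕ → ℝ, ∑ i ∈ Finset.range R, g i
      = ∑ i ∈ Finset.range (l+1), g i + ∑ i ∈ Finset.Ico (l+1) R, g i := fun g =>
    (Finset.sum_range_add_sum_Ico g hlR).symm
  have hneg : ∀ i, i < l + 1 → c i < 0 := by
    intro i hi
    rcases Nat.lt_or_ge i l with h | h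
    · exact (hc i l h (by omega)).trans hcl
    · have : i = l := by omega
      rwa [this]
  have hpos : ∀ i, l + 1 ≤ i → i < R → 0 ≤ c i := by
    intro i hi hiR
    rcases Nat.lt_or_ge (l+1) i with h | h
    · exact hcl'.trans (hc _ i h hiR).le
    · have : i = l + 1 := by omega
      rwa [this]
  have hcomp : ∀ i, Filter.Tendsto (fun h : ℝ => z + c i * h) (nhdsWithin 0 (Set.Ioi 0)) (nhds z) := by
    intro i
    have : Continuous (fun h : ℝ => z + c i * h) := by fun_prop
    have := this.tendsto 0
    simp only [mul_zero, add_zero] at this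
    exact this.mono_left nhdsWithin_le_nhds
  have hLt : Filter.Tendsto fL (nhds z) (nhds (fL z)) := hfL.continuousAt hU
  have hRt : Filter.Tendsto fR (nhds z) (nhds (fR z)) := hfR.continuousAt hU
  have hlim : ∀ i ∈ Finset.range R, Filter.Tendsto
      (fun h : ℝ => f (z + c i * h) / ∏ j ∈ (Finset.range R).erase i, (c i - c j))
      (nhdsWithin 0 (Set.Ioi 0))
      (nhds ((if i < l + 1 then fL z else fR z) / ∏ j ∈ (Finset.range R).erase i, (c i - c j))) := by
    intro i hi
    apply Filter.Tendsto.div_const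
    split_ifs with h
    · refine (hLt.comp (hcomp i)).congr' ?_
      filter_upwards [self_mem_nhdsWithin] with x hx
      have := mul_neg_of_neg_of_pos (hneg i h) hx
      simp only [Function.comp]
      rw [hf, if_pos (by linarith)]
    · refine (hRt.comp (hcomp i)).congr' ?_
      filter_upwards [self_mem_nhdsWithin] with x hx
      have := mul_nonneg (hpos i (by omega) (Finset.mem_range.mp hi)) (le_of_lt hx)
      simp only [Function.comp]
      rw [hf, if_neg (by linarith)]
  have hval : ∑ i ∈ Finset.range R,
      (if i < l + 1 then fL z else fR z) / ∏ j ∈ (Finset.range R).erase i, (c i - c j)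
      = (fR z - fL z) * κ := by
    rw [hsplit, ← hκdef] at hzero
    rw [hsplit]
    have e1 : ∑ i ∈ Finset.range (l+1),
        (if i < l + 1 then fL z else fR z) / ∏ j ∈ (Finset.range R).erase i, (c i - c j)
        = fL z * ∑ i ∈ Finset.range (l+1), 1 / ∏ j ∈ (Finset.range R).erase i, (c i - c j) := by
      rw [Finset.mul_sum]
      refine Finset.sum_congr rfl fun i hi => ?_
      rw [if_pos (Finset.mem_range.mp hi), mul_one_div]
    have e2 : ∑ i ∈ Finset.Ico (l+1) R,
        (if i < l + 1 then fL z else fR z) / ∏ j ∈ (Finset.range R).erase i, (c i - c j)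
        = fR z * κ := by
      rw [hκdef, Finset.mul_sum]
      refine Finset.sum_congr rfl fun i hi => ?_
      rw [if_neg (by have := (Finset.mem_Ico.mp hi).1; omega), mul_one_div]
    rw [e1, e2]
    linear_combination fL z * hzero
  have main := tendsto_finsetSum _ hlim
  rw [hval] at main
  refine ⟨main, fun hκ => ⟨?_, ?_⟩⟩
  · have h1 : ((R - 1).factorial : ℝ) ≠ 0 := by exact_mod_cast Nat.factorial_ne_zero _
    have h2 : fR z - fL z ≠ 0 := sub_ne_zero.mpr hjump.symm
    positivity
  · rw [mul_assoc]
    exact (main.const_mul _).pow 2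
end

section
/- For every t ∈ ℝ, ∫_0^{2π} 2e^t/((1 − cos x) + (1 + cos x)·e^{2t}) dx = 2π. -/
/-- **Conservation of total mass:** for every `t`,
`∫₀^{2π} 2eᵗ/((1 - cos x) + (1 + cos x)e^{2t}) dx = 2π`. -/
theorem stmt_17 (t : ℝ) :
    ∫ x in (0 : ℝ)..(2 * Real.pi),
      2 * Real.exp t / ((1 - Real.cos x) + (1 + Real.cos x) * Real.exp (2 * t))
      = 2 * Real.pi := by
  have h2 : Real.exp (2 * t) = Real.exp t ^ 2 := by
    rw [two_mul, Real.exp_add, sq]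
  rw [h2]
  have ha := Real.exp_pos t
  generalize Real.exp t = a at ha
  have hN : ∀ x, 0 < (a + 1) + (a - 1) * Real.cos x := by
    intro x
    have h3 := Real.cos_le_one x
    have h4 := Real.neg_one_le_cos x
    by_cases h : 0 < 1 + Real.cos x
    · nlinarith [mul_pos ha h]
    · nlinarith
  have hD : ∀ x, 0 < (1 - Real.cos x) + (1 + Real.cos x) * a ^ 2 := by
    intro x
    have h3 := Real.cos_le_one x
    have h4 := Real.neg_one_le_cos x
    have h5 : 0 < a ^ 2 := by positivity
    by_cases h : 0 < 1 + Real.cos x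
    · nlinarith [mul_pos h h5]
    · nlinarith
  have key : ∀ x ∈ Set.uIcc (0 : ℝ) (2 * Real.pi), HasDerivAt
      (fun x => x - 2 * Real.arctan ((a - 1) * Real.sin x / ((a + 1) + (a - 1) * Real.cos x)))
      (2 * a / ((1 - Real.cos x) + (1 + Real.cos x) * a ^ 2)) x := by
    intro x _
    have hn := (hN x).ne'
    have h1 := ((Real.hasDerivAt_sin x).const_mul (a - 1)).div
      (((Real.hasDerivAt_cos x).const_mul (a - 1)).const_add (a + 1)) hn
    have h := (hasDerivAt_id x).sub (h1.arctan.const_mul 2)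
    refine h.congr_deriv ?_
    have hd := (hD x).ne'
    have hs := Real.sin_sq_add_cos_sq x
    simp only [Pi.div_apply]
    generalize Real.sin x = s at *
    generalize Real.cos x = c at *
    have e : ((a + 1) + (a - 1) * c) ^ 2 + ((a - 1) * s) ^ 2
        = 2 * ((1 - c) + (1 + c) * a ^ 2) := by
      linear_combination (a - 1) ^ 2 * hs
    have e2 : 1 + ((a - 1) * s / ((a + 1) + (a - 1) * c)) ^ 2
        = 2 * ((1 - c) + (1 + c) * a ^ 2) / ((a + 1) + (a - 1) * c) ^ 2 := by
      rw [← e]; field_simp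
    rw [e2]
    have aux : ∀ D N M : ℝ, D ≠ 0 → N ≠ 0 →
        1 - 2 * (1 / (2 * D / N ^ 2) * (M / N ^ 2)) = (D - M) / D := by
      intro D N M h1 h2
      field_simp
    rw [aux _ _ _ hd hn]
    congr 1
    linear_combination (-(a - 1) ^ 2) * hs
  rw [intervalIntegral.integral_eq_sub_of_hasDerivAt key]
  · simp
  · apply Continuous.intervalIntegrable
    exact Continuous.div (by fun_prop) (by fun_prop) (fun x => (hD x).ne')
end
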